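/- arXiv:math/0405482 — 2 statements merged into one kernel-verified Lean document; each statement's English description precedes it below -/
import Mathlib

section
/- For every n ≥ 1 and every bijection σ : Fin n → Fin n, every triple diagram whose arcs realize σ (loops permitted) has at least N(σ) triple points, where N(σ) is the number of ordered pairs (i, j) of indices with i ≠ j such that, writing a = 2i, b = 2j, c = 2σ(i)+1, d = 2σ(j)+1 as integers in {0,…,2n−1}, either a < b < c < d or d < c < b < a. Consequently the minimum number of triple points over all triple diagrams whose arcs realize σ equals N(σ). -/
open Set Metric Real
open scoped RealInnerProductSpace

noncomputable section

/-- The Euclidean plane. -/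
abbrev Plane : Type := EuclideanSpace ℝ (Fin 2)

/-- The point of the unit circle at angle `θ`. -/
def unitPt (θ : ℝ) : Plane := (WithLp.equiv 2 (Fin 2 → ℝ)).symm ![Real.cos θ, Real.sin θ]

/-- The `2n` marked boundary points `v_k = (cos (kπ/n), sin (kπ/n))`. -/
def bpoint (n k : ℕ) : Plane := unitPt (k * Real.pi / n)

/-- The underlying geometric data of a diagram in the closed unit disk:
`na` smooth immersed arcs with endpoints on the boundary circle (transverse to it,
pairwise distinct endpoints, interior in the open disk) and `nl` smooth immersed
loops (1-periodic) contained in the open disk. -/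
structure PreDiagram (na nl : ℕ) where
  arc : Fin na → ℝ → Plane
  loop : Fin nl → ℝ → Plane
  arc_smooth : ∀ i, ContDiff ℝ (⊤ : ℕ∞) (arc i)
  loop_smooth : ∀ i, ContDiff ℝ (⊤ : ℕ∞) (loop i)
  loop_periodic : ∀ i, Function.Periodic (loop i) 1
  arc_immersed : ∀ i, ∀ t ∈ Icc (0:ℝ) 1, deriv (arc i) t ≠ 0
  loop_immersed : ∀ i t, deriv (loop i) t ≠ 0
  arc_in_disk : ∀ i, ∀ t ∈ Icc (0:ℝ) 1, ‖arc i t‖ ≤ 1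
  arc_interior : ∀ i, ∀ t ∈ Ioo (0:ℝ) 1, ‖arc i t‖ < 1
  arc_start_bdry : ∀ i, ‖arc i 0‖ = 1
  arc_end_bdry : ∀ i, ‖arc i 1‖ = 1
  arc_transverse_start : ∀ i, ⟪deriv (arc i) 0, arc i 0⟫ ≠ 0
  arc_transverse_end : ∀ i, ⟪deriv (arc i) 1, arc i 1⟫ ≠ 0
  loop_in_disk : ∀ i t, ‖loop i t‖ < 1
  endpoints_distinct :
    Function.Injective (Sum.elim (fun i => arc i 0) (fun i => arc i 1) :
      Fin na ⊕ Fin na → Plane)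

variable {na nl : ℕ}

/-- The passages of the strands of a diagram through the point `p`: parameter values
(with the strand they belong to) mapping to `p`.  For arcs the relevant parameters lie in
`(0,1)`; for loops we take one period `[0,1)`. -/
def PreDiagram.passages (D : PreDiagram na nl) (p : Plane) :
    Set ((Fin na × ℝ) ⊕ (Fin nl × ℝ)) :=
  Sum.elim (fun q => q.2 ∈ Ioo (0:ℝ) 1 ∧ D.arc q.1 q.2 = p)
           (fun q => q.2 ∈ Ico (0:ℝ) 1 ∧ D.loop q.1 q.2 = p)

/-- The (forward) tangent vector of the branch through a given passage. -/
def PreDiagram.tangent (D : PreDiagram na nl) :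
    (Fin na × ℝ) ⊕ (Fin nl × ℝ) → Plane :=
  Sum.elim (fun q => deriv (D.arc q.1) q.2) (fun q => deriv (D.loop q.1) q.2)

/-- A multiple point: a point traversed more than once by the strands,
counting with multiplicity in the parameters. -/
def PreDiagram.IsMultiplePoint (D : PreDiagram na nl) (p : Plane) : Prop :=
  ¬ (D.passages p).Subsingleton

/-- A triple diagram: a diagram whose set of multiple points is finite, such that through
each multiple point exactly three branches pass, with pairwise linearly independent
tangent vectors, and such that at each such triple point the six tangent rays of the
three branches alternate between outgoing and incoming in cyclic order (equivalently,
some positive combination of the three forward tangent vectors vanishes). -/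
structure TripleDiagram (na nl : ℕ) extends PreDiagram na nl where
  multiple_finite : {p : Plane | toPreDiagram.IsMultiplePoint p}.Finite
  triple : ∀ p : Plane, toPreDiagram.IsMultiplePoint p →
    (toPreDiagram.passages p).ncard = 3
  branches_transverse : ∀ p : Plane, toPreDiagram.IsMultiplePoint p →
    ∀ q₁ ∈ toPreDiagram.passages p, ∀ q₂ ∈ toPreDiagram.passages p, q₁ ≠ q₂ →
      LinearIndependent ℝ ![toPreDiagram.tangent q₁, toPreDiagram.tangent q₂]
  alternating : ∀ p : Plane, toPreDiagram.IsMultiplePoint p →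
    ∃ q₁ q₂ q₃, toPreDiagram.passages p = {q₁, q₂, q₃} ∧
      ∃ a b c : ℝ, 0 < a ∧ 0 < b ∧ 0 < c ∧
        a • toPreDiagram.tangent q₁ + b • toPreDiagram.tangent q₂ +
          c • toPreDiagram.tangent q₃ = 0

/-- The number of triple points of a triple diagram. -/
def TripleDiagram.tripleCount (D : TripleDiagram na nl) : ℕ :=
  {p : Plane | D.toPreDiagram.IsMultiplePoint p}.ncard

/-- A triple diagram (with `n` arcs) realizes the bijection `σ` if its `i`-th arc runs from
the 'in' point `v_{2i}` to the 'out' point `v_{2σ(i)+1}`. -/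
def Realizes {n nl : ℕ} (D : TripleDiagram n nl) (σ : Equiv.Perm (Fin n)) : Prop :=
  ∀ i : Fin n, D.arc i 0 = bpoint n (2 * (i : ℕ)) ∧ D.arc i 1 = bpoint n (2 * (σ i : ℕ) + 1)

/-- `N(σ)`: the number of ordered pairs `(i,j)`, `i ≠ j`, such that with `a = 2i`, `b = 2j`,
`c = 2σ(i)+1`, `d = 2σ(j)+1` in `{0,…,2n−1}`, either `a < b < c < d` or `d < c < b < a`. -/
def Ncross (n : ℕ) (σ : Equiv.Perm (Fin n)) : ℕ :=
  (Finset.univ.filter fun ij : Fin n × Fin n =>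
    ij.1 ≠ ij.2 ∧
      ((2 * (ij.1 : ℕ) < 2 * (ij.2 : ℕ) ∧
        2 * (ij.2 : ℕ) < 2 * (σ ij.1 : ℕ) + 1 ∧
        2 * (σ ij.1 : ℕ) + 1 < 2 * (σ ij.2 : ℕ) + 1) ∨
       (2 * (σ ij.2 : ℕ) + 1 < 2 * (σ ij.1 : ℕ) + 1 ∧
        2 * (σ ij.1 : ℕ) + 1 < 2 * (ij.2 : ℕ) ∧
        2 * (ij.2 : ℕ) < 2 * (ij.1 : ℕ)))).card

end

section
open Set Metric Real
noncomputable section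
namespace TD

/-- squared distance of the two curves -/
def rr (f1 f2 g1 g2 : ℝ → ℝ) (x : ℝ × ℝ) : ℝ := (g1 x.2 - f1 x.1)^2 + (g2 x.2 - f2 x.1)^2

def Qf (h f1 f2 g1 g2 : ℝ → ℝ) (x : ℝ × ℝ) : ℝ :=
  h (rr f1 f2 g1 g2 x) * ((g1 x.2 - f1 x.1) * deriv g2 x.2 - (g2 x.2 - f2 x.1) * deriv g1 x.2)

def Pf (h f1 f2 g1 g2 : ℝ → ℝ) (x : ℝ × ℝ) : ℝ :=
  h (rr f1 f2 g1 g2 x) * (-(g1 x.2 - f1 x.1) * deriv f2 x.1 + (g2 x.2 - f2 x.1) * deriv f1 x.1)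

theorem green (h f1 f2 g1 g2 : ℝ → ℝ) (hh : ContDiff ℝ (⊤ : ℕ∞) h)
    (hf1 : ContDiff ℝ (⊤ : ℕ∞) f1) (hf2 : ContDiff ℝ (⊤ : ℕ∞) f2)
    (hg1 : ContDiff ℝ (⊤ : ℕ∞) g1) (hg2 : ContDiff ℝ (⊤ : ℕ∞) g2) :
    ∫ x in Icc ((0:ℝ),(0:ℝ)) (1,1),
      (2 * (h (rr f1 f2 g1 g2 x) + rr f1 f2 g1 g2 x * deriv h (rr f1 f2 g1 g2 x))) *
        (deriv f2 x.1 * deriv g1 x.2 - deriv f1 x.1 * deriv g2 x.2) =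
      (∫ t in (0:ℝ)..1, Qf h f1 f2 g1 g2 (1, t)) - (∫ t in (0:ℝ)..1, Qf h f1 f2 g1 g2 (0, t))
      - (∫ s in (0:ℝ)..1, Pf h f1 f2 g1 g2 (s, 1)) + (∫ s in (0:ℝ)..1, Pf h f1 f2 g1 g2 (s, 0)) := by
  have d1 : ContDiff ℝ (⊤ : ℕ∞) (deriv f1) := (contDiff_infty_iff_deriv.1 hf1).2
  have d2 : ContDiff ℝ (⊤ : ℕ∞) (deriv f2) := (contDiff_infty_iff_deriv.1 hf2).2
  have d3 : ContDiff ℝ (⊤ : ℕ∞) (deriv g1) := (contDiff_infty_iff_deriv.1 hg1).2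
  have d4 : ContDiff ℝ (⊤ : ℕ∞) (deriv g2) := (contDiff_infty_iff_deriv.1 hg2).2
  have hr : ContDiff ℝ (⊤ : ℕ∞) (rr f1 f2 g1 g2) := by unfold rr; fun_prop
  have hQ : ContDiff ℝ (⊤ : ℕ∞) (Qf h f1 f2 g1 g2) := by
    unfold Qf
    exact (hh.comp hr).mul (by fun_prop)
  have hP : ContDiff ℝ (⊤ : ℕ∞) (fun x => - Pf h f1 f2 g1 g2 x) := by
    unfold Pf
    exact ((hh.comp hr).mul (by fun_prop)).neg
  have dd (f : ℝ → ℝ) (hf : ContDiff ℝ (⊤ : ℕ∞) f) (x : ℝ) : HasDerivAt f (deriv f x) x :=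
    (hf.differentiable (by simp) x).hasDerivAt
  have key : ∀ x : ℝ × ℝ, fderiv ℝ (Qf h f1 f2 g1 g2) x (1,0)
      + fderiv ℝ (fun x => - Pf h f1 f2 g1 g2 x) x (0,1) =
      (2 * (h (rr f1 f2 g1 g2 x) + rr f1 f2 g1 g2 x * deriv h (rr f1 f2 g1 g2 x))) *
        (deriv f2 x.1 * deriv g1 x.2 - deriv f1 x.1 * deriv g2 x.2) := by
    rintro ⟨s, t⟩
    have e1 : HasDerivAt (fun s => Qf h f1 f2 g1 g2 (s, t))
        (fderiv ℝ (Qf h f1 f2 g1 g2) (s,t) (1,0)) s :=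
      HasFDerivAt.comp_hasDerivAt (l := Qf h f1 f2 g1 g2) s
        (hQ.differentiable (by simp) (s,t)).hasFDerivAt
        ((hasDerivAt_id' s).prodMk (hasDerivAt_const s t))
    have e2 : HasDerivAt (fun t => - Pf h f1 f2 g1 g2 (s, t))
        (fderiv ℝ (fun x => - Pf h f1 f2 g1 g2 x) (s,t) (0,1)) t :=
      HasFDerivAt.comp_hasDerivAt t (hP.differentiable (by simp) (s,t)).hasFDerivAt
        ((hasDerivAt_const t s).prodMk (hasDerivAt_id' t))
    have r1 : HasDerivAt (fun s => rr f1 f2 g1 g2 (s,t)) _ s :=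
      (((dd f1 hf1 s).const_sub (g1 t)).pow 2).add (((dd f2 hf2 s).const_sub (g2 t)).pow 2)
    have r2 : HasDerivAt (fun t => rr f1 f2 g1 g2 (s,t)) _ t :=
      (((dd g1 hg1 t).sub_const (f1 s)).pow 2).add (((dd g2 hg2 t).sub_const (f2 s)).pow 2)
    have e1' : HasDerivAt (fun s => Qf h f1 f2 g1 g2 (s, t)) _ s :=
      (HasDerivAt.comp s (dd h hh (rr f1 f2 g1 g2 (s,t))) r1).mul
        ((((dd f1 hf1 s).const_sub (g1 t)).mul_const (deriv g2 t)).sub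
        (((dd f2 hf2 s).const_sub (g2 t)).mul_const (deriv g1 t)))
    have e2' : HasDerivAt (fun t => - Pf h f1 f2 g1 g2 (s, t)) _ t :=
      ((HasDerivAt.comp t (dd h hh (rr f1 f2 g1 g2 (s,t))) r2).mul
        ((((dd g1 hg1 t).sub_const (f1 s)).neg.mul_const (deriv f2 s)).add
        (((dd g2 hg2 t).sub_const (f2 s)).mul_const (deriv f1 s)))).neg
    rw [e1.unique e1', e2.unique e2']
    simp only [rr, Function.comp, Nat.cast_ofNat, Pi.neg_apply, Pi.add_apply]
    ring
  have := MeasureTheory.integral_divergence_prod_Icc_of_hasFDerivAt_of_le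
    (Qf h f1 f2 g1 g2) (fun x => - Pf h f1 f2 g1 g2 x) (fderiv ℝ (Qf h f1 f2 g1 g2))
    (fderiv ℝ (fun x => - Pf h f1 f2 g1 g2 x)) (0,0) (1,1) (by constructor <;> simp)
    hQ.continuous.continuousOn hP.continuous.continuousOn
    (fun x _ => (hQ.differentiable (by simp) x).hasFDerivAt)
    (fun x _ => (hP.differentiable (by simp) x).hasFDerivAt)
    (by
      apply ContinuousOn.integrableOn_compact isCompact_Icc
      exact (((hQ.continuous_fderiv (by simp)).clm_apply continuous_const).add
        ((hP.continuous_fderiv (by simp)).clm_apply continuous_const)).continuousOn)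
  simp only [key] at this
  rw [this]
  simp only [intervalIntegral.integral_neg]
  ring

end TD
end
end

section
open Set Metric Real
noncomputable section
namespace TD
open MeasureTheory Filter Topology

theorem localize (F : ℝ × ℝ → ℝ × ℝ) (hF : ContDiff ℝ 1 F) (K : Set (ℝ × ℝ)) (hK : IsCompact K)
    (Z : Finset (ℝ × ℝ)) (hZ : ∀ x ∈ K, F x = 0 → x ∈ Z)
    (hZ0 : ∀ z ∈ Z, F z = 0 ∧ K ∈ 𝓝 z ∧ (fderiv ℝ F z).det ≠ 0) :
    ∀ᶠ ε in 𝓝[>] (0:ℝ), ∀ φ : ℝ × ℝ → ℝ, Continuous φ → (∀ y, ε ≤ ‖y‖ → φ y = 0) →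
      ∫ x in K, φ (F x) * (fderiv ℝ F x).det =
        (∑ z ∈ Z, ((SignType.sign (fderiv ℝ F z).det : SignType) : ℝ)) * ∫ y, φ y := by
  have hcont : Continuous (fun x => (fderiv ℝ F x).det) :=
    ContinuousLinearMap.continuous_det.comp (hF.continuous_fderiv (by simp))
  -- local neighbourhoods
  have hloc : ∀ z ∈ Z, ∃ U : Set (ℝ × ℝ), IsOpen U ∧ z ∈ U ∧ U ⊆ K ∧ InjOn F U ∧
      (∀ x ∈ U, SignType.sign (fderiv ℝ F x).det = SignType.sign (fderiv ℝ F z).det) := by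
    intro z hz
    obtain ⟨h0, hKz, hd⟩ := hZ0 z hz
    have hs : HasStrictFDerivAt F
        (((fderiv ℝ F z).toContinuousLinearEquivOfDetNeZero hd : (ℝ × ℝ) ≃L[ℝ] (ℝ × ℝ)) :
          (ℝ × ℝ) →L[ℝ] (ℝ × ℝ)) z := by
      rw [ContinuousLinearMap.coe_toContinuousLinearEquivOfDetNeZero]
      exact hF.contDiffAt.hasStrictFDerivAt (by simp)
    have hinj := (hs.toOpenPartialHomeomorph F).injOn
    have hsrc : (hs.toOpenPartialHomeomorph F).source ∈ 𝓝 z :=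
      (hs.toOpenPartialHomeomorph F).open_source.mem_nhds hs.mem_toOpenPartialHomeomorph_source
    have hsg : ∀ᶠ x in 𝓝 z, SignType.sign (fderiv ℝ F x).det = SignType.sign (fderiv ℝ F z).det := by
      rcases lt_or_gt_of_ne hd with h | h
      · filter_upwards [hcont.continuousAt.eventually_lt continuousAt_const h] with x hx
        rw [sign_neg hx, sign_neg h]
      · filter_upwards [continuousAt_const.eventually_lt hcont.continuousAt h] with x hx
        rw [sign_pos hx, sign_pos h]
    obtain ⟨U, hU, hUo, hzU⟩ := _root_.mem_nhds_iff.1 (inter_mem (inter_mem hsrc hKz) hsg)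
    refine ⟨U, hUo, hzU, fun x hx => (hU hx).1.2, ?_, fun x hx => (hU hx).2⟩
    intro x hx y hy hxy
    exact hinj (hU hx).1.1 (hU hy).1.1 (by simpa using hxy)
  choose! U hUo hzU hUK hUi hUs using hloc
  obtain ⟨V, hV, hVd⟩ := Set.Finite.t2_separation Z.finite_toSet
  set W : ℝ × ℝ → Set (ℝ × ℝ) := fun z => U z ∩ V z with hW
  have hWo : ∀ z ∈ Z, IsOpen (W z) := fun z hz => (hUo z hz).inter (hV z).2
  have hzW : ∀ z ∈ Z, z ∈ W z := fun z hz => ⟨hzU z hz, (hV z).1⟩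
  have hWim : ∀ z ∈ Z, F '' W z ∈ 𝓝 (0 : ℝ × ℝ) := by
    intro z hz
    obtain ⟨h0, hKz, hd⟩ := hZ0 z hz
    have hs : HasStrictFDerivAt F
        (((fderiv ℝ F z).toContinuousLinearEquivOfDetNeZero hd : (ℝ × ℝ) ≃L[ℝ] (ℝ × ℝ)) :
          (ℝ × ℝ) →L[ℝ] (ℝ × ℝ)) z := by
      rw [ContinuousLinearMap.coe_toContinuousLinearEquivOfDetNeZero]
      exact hF.contDiffAt.hasStrictFDerivAt (by simp)
    have := hs.map_nhds_eq_of_equiv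
    rw [h0] at this
    rw [← this]
    exact image_mem_map ((hWo z hz).mem_nhds (hzW z hz))
  set WW : Set (ℝ × ℝ) := ⋃ z ∈ Z, W z with hWW
  have hWWo : IsOpen WW := isOpen_biUnion hWo
  have hWWK : WW ⊆ K := iUnion₂_subset fun z hz => inter_subset_left.trans (hUK z hz)
  have hKc : IsCompact (K \ WW) := hK.diff hWWo
  have hmin : ∃ m > 0, ∀ x ∈ K \ WW, m ≤ ‖F x‖ := by
    rcases (K \ WW).eq_empty_or_nonempty with h | h
    · exact ⟨1, one_pos, by simp [h]⟩
    · obtain ⟨x, hx, hm⟩ := hKc.exists_isMinOn h (hF.continuous.norm.continuousOn)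
      refine ⟨‖F x‖, ?_, fun y hy => hm hy⟩
      rw [gt_iff_lt, norm_pos_iff]
      intro h0
      have := hZ x hx.1 h0
      exact hx.2 (mem_biUnion (Finset.mem_coe.2 this) (hzW x this))
  obtain ⟨m, hm0, hm⟩ := hmin
  have hball : ∀ᶠ ε in 𝓝[>] (0:ℝ), ∀ z ∈ Z, ball (0 : ℝ × ℝ) ε ⊆ F '' W z := by
    rw [Finset.eventually_all]
    intro z hz
    obtain ⟨δ, hδ, hb⟩ := Metric.mem_nhds_iff.1 (hWim z hz)
    filter_upwards [Ioo_mem_nhdsGT hδ] with ε hε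
    exact (ball_subset_ball hε.2.le).trans hb
  filter_upwards [hball, Ioo_mem_nhdsGT hm0] with ε hε hεm φ hφ hφ0
  have hcnt : Continuous (fun x => φ (F x) * (fderiv ℝ F x).det) :=
    (hφ.comp hF.continuous).mul hcont
  have e1 : ∫ x in K, φ (F x) * (fderiv ℝ F x).det = ∫ x in WW, φ (F x) * (fderiv ℝ F x).det := by
    apply setIntegral_eq_of_subset_of_forall_sdiff_eq_zero hK.measurableSet hWWK
    intro x hx
    rw [hφ0 _ (hεm.2.le.trans (hm x hx)), zero_mul]
  rw [e1, hWW, integral_biUnion_finset Z (fun z hz => (hWo z hz).measurableSet), Finset.sum_mul]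
  · apply Finset.sum_congr rfl
    intro z hz
    have e2 : ∫ x in W z, φ (F x) * (fderiv ℝ F x).det =
        ∫ x in W z, ((SignType.sign (fderiv ℝ F z).det : SignType) : ℝ) *
          (|(fderiv ℝ F x).det| • φ (F x)) := by
      apply setIntegral_congr_fun (hWo z hz).measurableSet
      intro x hx
      have h1 := hUs z hz x hx.1
      have h2 := sign_mul_abs ((fderiv ℝ F x).det)
      simp only [← h1, smul_eq_mul]
      nth_rewrite 1 [← h2]
      ring
    rw [e2, integral_const_mul,
      ← integral_image_eq_integral_abs_det_fderiv_smul volume (hWo z hz).measurableSet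
        (fun x _ => (hF.differentiable (by simp) x).hasFDerivAt.hasFDerivWithinAt)
        ((hUi z hz).mono inter_subset_left)]
    congr 1
    apply setIntegral_eq_integral_of_forall_compl_eq_zero
    intro x hx
    apply hφ0
    by_contra hlt
    exact hx (hε z hz (by simpa using hlt))
  · intro a ha b hb hab
    exact (hVd ha hb hab).mono inter_subset_right inter_subset_right
  · intro z hz
    exact (hcnt.continuousOn.integrableOn_compact hK).mono_set
      (inter_subset_left.trans (hUK z hz))

end TD
end
end

section
open Set Metric Real
noncomputable section
namespace TD
open MeasureTheory Filter Topology

/-- The cut-off version of `1/r`. -/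
def hcut (ε r : ℝ) : ℝ := Real.smoothTransition (4 * r / ε^2 - 1) * r⁻¹

theorem hcut_contDiff {ε : ℝ} (hε : 0 < ε) : ContDiff ℝ (⊤ : ℕ∞) (hcut ε) := by
  rw [contDiff_iff_contDiffAt]
  intro r
  by_cases hr : r = 0
  · have : (fun _ => (0:ℝ)) =ᶠ[𝓝 r] hcut ε := by
      have h1 : ∀ᶠ x in 𝓝 r, x < ε^2/4 := by
        apply eventually_lt_nhds; rw [hr]; positivity
      filter_upwards [h1] with x hx
      rw [hcut, Real.smoothTransition.zero_of_nonpos, zero_mul]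
      rw [sub_nonpos, div_le_one (by positivity)]; linarith
    exact contDiffAt_const.congr_of_eventuallyEq this.symm
  · apply ContDiffAt.mul
    · exact (Real.smoothTransition.contDiff (n := ⊤)).contDiffAt.comp r (by fun_prop)
    · exact contDiffAt_inv ℝ hr

theorem hcut_eq {ε r : ℝ} (hε : 0 < ε) (hr : ε^2/2 ≤ r) : hcut ε r = r⁻¹ := by
  rw [hcut, Real.smoothTransition.one_of_one_le, one_mul]
  rw [le_sub_iff_add_le, le_div_iff₀ (by positivity)]; linarith

def phi (ε r : ℝ) : ℝ := 2 * (hcut ε r + r * deriv (hcut ε) r)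

theorem phi_continuous {ε : ℝ} (hε : 0 < ε) : Continuous (phi ε) := by
  have := (contDiff_infty_iff_deriv.1 (hcut_contDiff hε)).2.continuous
  have h2 := (hcut_contDiff hε).continuous
  unfold phi
  fun_prop

theorem phi_zero {ε r : ℝ} (hε : 0 < ε) (hr : ε^2 ≤ r) : phi ε r = 0 := by
  have hr0 : 0 < r := lt_of_lt_of_le (by positivity) hr
  have : hcut ε =ᶠ[𝓝 r] fun x => x⁻¹ := by
    have h1 : ∀ᶠ x in 𝓝 r, ε^2/2 < x := by
      apply eventually_gt_nhds; nlinarith [pow_pos hε 2]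
    filter_upwards [h1] with x hx
    exact hcut_eq hε hx.le
  rw [phi, this.deriv_eq, this.eq_of_nhds, deriv_inv]
  field_simp
  ring

/-- value of the angle function for a chord -/
theorem arctan_val {θ ψ : ℝ} (hθ : θ ∈ Ico 0 (2*π)) (hψ : ψ ∈ Ico 0 (2*π)) (h : ψ ≠ θ) :
    arctan ((cos ψ * sin θ - sin ψ * cos θ) / (1 - cos ψ * cos θ - sin ψ * sin θ)) =
      (ψ - θ)/2 - (SignType.sign (ψ - θ) : ℝ) * (π/2) := by
  have hc1 : cos ψ * sin θ - sin ψ * cos θ = - (2 * sin ((ψ-θ)/2) * cos ((ψ-θ)/2)) := by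
    rw [← sin_two_mul, show 2 * ((ψ-θ)/2) = ψ - θ by ring, sin_sub]; ring
  have hc2 : 1 - cos ψ * cos θ - sin ψ * sin θ = 2 * sin ((ψ-θ)/2)^2 := by
    have := cos_sq_add_sin_sq ((ψ-θ)/2)
    have h2 := cos_two_mul ((ψ-θ)/2)
    rw [show 2 * ((ψ-θ)/2) = ψ - θ by ring, cos_sub] at h2
    linarith
  have hp := Real.pi_pos
  have hs : sin ((ψ-θ)/2) ≠ 0 := by
    rcases lt_or_gt_of_ne h with h | h
    · exact (sin_neg_of_neg_of_neg_pi_lt (by linarith) (by linarith [hθ.2, hψ.1])).ne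
    · exact (sin_pos_of_pos_of_lt_pi (by linarith) (by linarith [hθ.1, hψ.2])).ne'
  have hc3 : (cos ψ * sin θ - sin ψ * cos θ) / (1 - cos ψ * cos θ - sin ψ * sin θ)
      = - (cos ((ψ-θ)/2) / sin ((ψ-θ)/2)) := by
    rw [hc1, hc2]; field_simp
  rw [hc3]
  rcases lt_or_gt_of_ne h with h | h
  · rw [sign_neg (by linarith)]
    have : - (cos ((ψ-θ)/2) / sin ((ψ-θ)/2)) = tan ((ψ-θ)/2 + π/2) := by
      rw [tan_eq_sin_div_cos, sin_add_pi_div_two, cos_add_pi_div_two, div_neg]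
    rw [this, arctan_tan]
    · simp
    · linarith [hθ.2, hψ.1]
    · linarith
  · rw [sign_pos (by linarith)]
    have : - (cos ((ψ-θ)/2) / sin ((ψ-θ)/2)) = tan ((ψ-θ)/2 - π/2) := by
      rw [tan_eq_sin_div_cos, sin_sub_pi_div_two, cos_sub_pi_div_two, neg_div]
    rw [this, arctan_tan]
    · simp
    · linarith
    · linarith [hθ.1, hψ.2]

theorem edge (x y : ℝ → ℝ) (hx : ContDiff ℝ (⊤ : ℕ∞) x) (hy : ContDiff ℝ (⊤ : ℕ∞) y)
    (θ : ℝ) (hd : ∀ t ∈ Icc (0:ℝ) 1, x t ^2 + y t^2 ≤ 1)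
    (hn : ∀ t ∈ Icc (0:ℝ) 1, (x t - cos θ)^2 + (y t - sin θ)^2 ≠ 0) :
    ∫ t in (0:ℝ)..1, ((x t - cos θ)^2 + (y t - sin θ)^2)⁻¹ *
      ((x t - cos θ) * deriv y t - (y t - sin θ) * deriv x t) =
    arctan ((x 1 * sin θ - y 1 * cos θ) / (1 - x 1 * cos θ - y 1 * sin θ)) -
    arctan ((x 0 * sin θ - y 0 * cos θ) / (1 - x 0 * cos θ - y 0 * sin θ)) := by
  have d1 : Continuous (deriv x) := (contDiff_infty_iff_deriv.1 hx).2.continuous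
  have d2 : Continuous (deriv y) := (contDiff_infty_iff_deriv.1 hy).2.continuous
  have hc := cos_sq_add_sin_sq θ
  have hpos : ∀ t ∈ Icc (0:ℝ) 1, 0 < 1 - x t * cos θ - y t * sin θ := by
    intro t ht
    have h1 := hd t ht
    have h2 : 0 < (x t - cos θ)^2 + (y t - sin θ)^2 :=
      lt_of_le_of_ne (by positivity) (hn t ht).symm
    nlinarith
  apply intervalIntegral.integral_eq_sub_of_hasDerivAt
    (f := fun t => arctan ((x t * sin θ - y t * cos θ) / (1 - x t * cos θ - y t * sin θ)))
  · intro t ht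
    rw [uIcc_of_le zero_le_one] at ht
    have hxd : HasDerivAt x (deriv x t) t := (hx.differentiable (by simp) t).hasDerivAt
    have hyd : HasDerivAt y (deriv y t) t := (hy.differentiable (by simp) t).hasDerivAt
    have hp := hpos t ht
    have := (((hxd.mul_const (sin θ)).sub (hyd.mul_const (cos θ))).div
      (((hxd.mul_const (cos θ)).const_sub 1).sub (hyd.mul_const (sin θ))) hp.ne').arctan
    refine HasDerivAt.congr_deriv this ?_
    have h2 := hn t ht
    have h3 : (1 - x t * cos θ - y t * sin θ)^2 + (x t * sin θ - y t * cos θ)^2 =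
        (x t - cos θ)^2 + (y t - sin θ)^2 := by
      linear_combination (x t ^2 + y t^2 - 1) * hc
    have gen : ∀ p q p' q' : ℝ, p ≠ 0 → p^2+q^2 ≠ 0 →
        1 / (1 + (q/p)^2) * ((q' * p - q * p') / p^2) = (p^2+q^2)⁻¹ * (q' * p - q * p') := by
      intro p q p' q' hp hq
      have : 1 + (q/p)^2 = (p^2+q^2)/p^2 := by field_simp
      rw [this]; field_simp
    have h5 := gen (1 - x t * cos θ - y t * sin θ) (x t * sin θ - y t * cos θ)
      (- (deriv x t * cos θ) - deriv y t * sin θ) (deriv x t * sin θ - deriv y t * cos θ) hp.ne'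
      (by rw [h3]; exact h2)
    rw [h3] at h5
    refine Eq.trans h5 ?_
    congr 1
    linear_combination (deriv y t * x t - deriv x t * y t) * hc
  · apply ContinuousOn.intervalIntegrable
    rw [uIcc_of_le zero_le_one]
    apply ContinuousOn.mul
    · apply ContinuousOn.inv₀
      · have := hx.continuous; have := hy.continuous; fun_prop
      · exact hn
    · have := hx.continuous; have := hy.continuous; fun_prop


theorem cos_sin_ne {θ ψ : ℝ} (hθ : θ ∈ Ico 0 (2*π)) (hψ : ψ ∈ Ico 0 (2*π)) (h : ψ ≠ θ) :
    (cos ψ - cos θ)^2 + (sin ψ - sin θ)^2 ≠ 0 := by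
  intro h0
  have h1 : cos ψ = cos θ := by nlinarith [sq_nonneg (cos ψ - cos θ), sq_nonneg (sin ψ - sin θ)]
  have h2 : sin ψ = sin θ := by nlinarith [sq_nonneg (cos ψ - cos θ), sq_nonneg (sin ψ - sin θ)]
  have h3 : ((ψ : Real.Angle)) = θ := Real.Angle.cos_sin_inj h1 h2
  rw [Real.Angle.angle_eq_iff_two_pi_dvd_sub] at h3
  obtain ⟨k, hk⟩ := h3
  have hp := Real.pi_pos
  have h4 : (k:ℝ) < 1 := by nlinarith [hθ.1, hψ.2]
  have h5 : (-1:ℝ) < k := by nlinarith [hθ.2, hψ.1]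
  have h6 : k = 0 := by
    have : k < 1 := by exact_mod_cast h4
    have : -1 < k := by exact_mod_cast h5
    omega
  rw [h6] at hk
  apply h
  simp at hk
  linarith

/-- Hypotheses on a planar arc in the disk. -/
structure DArc (x y : ℝ → ℝ) (A C : ℝ) : Prop where
  sx : ContDiff ℝ (⊤ : ℕ∞) x
  sy : ContDiff ℝ (⊤ : ℕ∞) y
  hA : A ∈ Ico 0 (2*π)
  hC : C ∈ Ico 0 (2*π)
  x0 : x 0 = cos A
  y0 : y 0 = sin A
  x1 : x 1 = cos C
  y1 : y 1 = sin C
  ins : ∀ t ∈ Ioo (0:ℝ) 1, x t ^2 + y t^2 < 1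

theorem DArc.le {x y : ℝ → ℝ} {A C : ℝ} (h : DArc x y A C) :
    ∀ t ∈ Icc (0:ℝ) 1, x t ^2 + y t^2 ≤ 1 := by
  intro t ht
  rcases eq_or_lt_of_le ht.1 with h0 | h0
  · rw [← h0, h.x0, h.y0, cos_sq_add_sin_sq]
  rcases eq_or_lt_of_le ht.2 with h1 | h1
  · rw [h1, h.x1, h.y1, cos_sq_add_sin_sq]
  exact (h.ins t ⟨h0, h1⟩).le

theorem DArc.ne {x y : ℝ → ℝ} {A C : ℝ} (h : DArc x y A C) {θ : ℝ} (hθ : θ ∈ Ico 0 (2*π))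
    (h1 : A ≠ θ) (h2 : C ≠ θ) :
    ∀ t ∈ Icc (0:ℝ) 1, (x t - cos θ)^2 + (y t - sin θ)^2 ≠ 0 := by
  intro t ht
  rcases eq_or_lt_of_le ht.1 with h0 | h0
  · rw [← h0, h.x0, h.y0]; exact cos_sin_ne hθ h.hA h1
  rcases eq_or_lt_of_le ht.2 with h1 | h1
  · rw [h1, h.x1, h.y1]; exact cos_sin_ne hθ h.hC h2
  intro h3
  have e1 : x t = cos θ := by nlinarith [sq_nonneg (x t - cos θ), sq_nonneg (y t - sin θ)]
  have e2 : y t = sin θ := by nlinarith [sq_nonneg (x t - cos θ), sq_nonneg (y t - sin θ)]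
  have := h.ins t ⟨h0, h1⟩
  rw [e1, e2, cos_sq_add_sin_sq] at this
  exact lt_irrefl _ this

theorem edge_val {x y : ℝ → ℝ} {A C : ℝ} (h : DArc x y A C) {θ : ℝ} (hθ : θ ∈ Ico 0 (2*π))
    (h1 : A ≠ θ) (h2 : C ≠ θ) :
    ∀ᶠ ε in 𝓝[>] (0:ℝ), ∫ t in (0:ℝ)..1, hcut ε ((x t - cos θ)^2 + (y t - sin θ)^2) *
      ((x t - cos θ) * deriv y t - (y t - sin θ) * deriv x t) =
      ((C - θ)/2 - (SignType.sign (C - θ) : ℝ) * (π/2)) -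
      ((A - θ)/2 - (SignType.sign (A - θ) : ℝ) * (π/2)) := by
  have hcx := h.sx.continuous
  have hcy := h.sy.continuous
  have hcont : Continuous (fun t => (x t - cos θ)^2 + (y t - sin θ)^2) := by fun_prop
  obtain ⟨t0, ht0, hmin⟩ := (isCompact_Icc (a := (0:ℝ)) (b := 1)).exists_isMinOn
    (by simp) hcont.continuousOn
  have hm : 0 < (x t0 - cos θ)^2 + (y t0 - sin θ)^2 :=
    lt_of_le_of_ne (by positivity) (h.ne hθ h1 h2 t0 ht0).symm
  have hlim : ∀ᶠ ε in 𝓝[>] (0:ℝ), ε^2/2 < (x t0 - cos θ)^2 + (y t0 - sin θ)^2 := by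
    have : Tendsto (fun ε : ℝ => ε^2/2) (𝓝[>] 0) (𝓝 (0^2/2)) :=
      ((by fun_prop : Continuous (fun ε : ℝ => ε^2/2)).tendsto 0).mono_left nhdsWithin_le_nhds
    exact this.eventually_lt_const (by simpa using hm)
  filter_upwards [hlim, self_mem_nhdsWithin] with ε hε hε0
  have := edge x y h.sx h.sy θ h.le (h.ne hθ h1 h2)
  rw [h.x0, h.y0, h.x1, h.y1, arctan_val hθ h.hA h1, arctan_val hθ h.hC h2] at this
  rw [← this]
  apply intervalIntegral.integral_congr
  intro t ht
  rw [uIcc_of_le zero_le_one] at ht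
  simp only
  rw [hcut_eq hε0 (hε.le.trans (hmin ht))]

def sg (r : ℝ) : ℝ := (SignType.sign r : ℝ)

def Cphi (ε : ℝ) : ℝ := ∫ y : ℝ × ℝ, phi ε (y.1^2 + y.2^2)

theorem inter_pre {f1 f2 g1 g2 : ℝ → ℝ} {A B C D : ℝ} (hf : DArc f1 f2 A C) (hg : DArc g1 g2 B D)
    (hAB : A ≠ B) (hAD : A ≠ D) (hCB : C ≠ B) (hCD : C ≠ D) (Z : Finset (ℝ × ℝ))
    (hZ : ∀ x : ℝ × ℝ, x ∈ Z ↔ x.1 ∈ Ioo (0:ℝ) 1 ∧ x.2 ∈ Ioo (0:ℝ) 1 ∧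
      f1 x.1 = g1 x.2 ∧ f2 x.1 = g2 x.2)
    (hT : ∀ x ∈ Z, deriv f1 x.1 * deriv g2 x.2 - deriv f2 x.1 * deriv g1 x.2 ≠ 0) :
    ∀ᶠ ε in 𝓝[>] (0:ℝ),
     (∑ x ∈ Z, sg (deriv f1 x.1 * deriv g2 x.2 - deriv f2 x.1 * deriv g1 x.2)) * Cphi ε =
       π * (sg (D - C) - sg (B - C) - sg (D - A) + sg (B - A)) := by
  set F : ℝ × ℝ → ℝ × ℝ := fun x => (g1 x.2 - f1 x.1, g2 x.2 - f2 x.1) with hF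
  have sf1 := hf.sx
  have sf2 := hf.sy
  have sg1 := hg.sx
  have sg2 := hg.sy
  have hFs : ContDiff ℝ (⊤ : ℕ∞) F := by rw [hF]; fun_prop
  have dd (f : ℝ → ℝ) (hf : ContDiff ℝ (⊤ : ℕ∞) f) (x : ℝ) : HasDerivAt f (deriv f x) x :=
    (hf.differentiable (by simp) x).hasDerivAt
  have hFd : ∀ x, HasFDerivAt F (LinearMap.toContinuousLinearMap
      (Matrix.toLin (Module.Basis.finTwoProd ℝ) (Module.Basis.finTwoProd ℝ)
      !![-deriv f1 x.1, deriv g1 x.2; -deriv f2 x.1, deriv g2 x.2])) x := by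
    intro x
    rw [Matrix.toLin_finTwoProd_toContinuousLinearMap]
    have a1 := ((dd g1 sg1 x.2).hasFDerivAt.comp x hasFDerivAt_snd).sub
      ((dd f1 sf1 x.1).hasFDerivAt.comp x hasFDerivAt_fst)
    have a2 := ((dd g2 sg2 x.2).hasFDerivAt.comp x hasFDerivAt_snd).sub
      ((dd f2 sf2 x.1).hasFDerivAt.comp x hasFDerivAt_fst)
    convert a1.prodMk a2 using 2
    all_goals (first | (ext <;> simp [hF]) | simp [hF])
  have hdet : ∀ x, (fderiv ℝ F x).det =
      deriv f2 x.1 * deriv g1 x.2 - deriv f1 x.1 * deriv g2 x.2 := by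
    intro x
    rw [(hFd x).fderiv]
    simp only [LinearMap.det_toContinuousLinearMap, LinearMap.det_toLin, Matrix.det_fin_two_of]
    ring
  have hloc := localize F (hFs.of_le (by exact_mod_cast le_top)) (Icc ((0:ℝ),(0:ℝ)) (1,1))
    isCompact_Icc Z ?_ ?_
  · have hQ1 := edge_val hg hf.hC hCB.symm hCD.symm
    have hQ0 := edge_val hg hf.hA hAB.symm hAD.symm
    have hP1 := edge_val hf hg.hC hAD hCD
    have hP0 := edge_val hf hg.hA hAB hCB
    filter_upwards [hloc, hQ1, hQ0, hP1, hP0, self_mem_nhdsWithin] with ε hl q1 q0 p1 p0 hε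
    have hε : 0 < ε := hε
    have hl := hl (fun y => phi ε (y.1^2 + y.2^2))
      ((phi_continuous hε).comp (by fun_prop)) (by
        intro y hy
        apply phi_zero hε
        rw [Prod.norm_def, le_max_iff] at hy
        rcases hy with hy | hy
        · have := pow_le_pow_left₀ hε.le hy 2
          rw [Real.norm_eq_abs, sq_abs] at this
          nlinarith [sq_nonneg y.2]
        · have := pow_le_pow_left₀ hε.le hy 2
          rw [Real.norm_eq_abs, sq_abs] at this
          nlinarith [sq_nonneg y.1])
    have hgr := green (hcut ε) f1 f2 g1 g2 (hcut_contDiff hε) sf1 sf2 sg1 sg2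
    simp only [hdet] at hl
    have e0 : (fun x : ℝ × ℝ => phi ε ((F x).1^2 + (F x).2^2) *
        (deriv f2 x.1 * deriv g1 x.2 - deriv f1 x.1 * deriv g2 x.2)) =
        fun x => (2 * (hcut ε (rr f1 f2 g1 g2 x) +
          rr f1 f2 g1 g2 x * deriv (hcut ε) (rr f1 f2 g1 g2 x))) *
        (deriv f2 x.1 * deriv g1 x.2 - deriv f1 x.1 * deriv g2 x.2) := rfl
    rw [e0, hgr] at hl
    have eQ1 : (∫ t in (0:ℝ)..1, Qf (hcut ε) f1 f2 g1 g2 (1, t)) = ((D - C)/2 - (SignType.sign (D - C) : ℝ) * (π/2)) -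
      ((B - C)/2 - (SignType.sign (B - C) : ℝ) * (π/2)) := by
      rw [← q1]
      simp only [Qf, rr, hf.x1, hf.y1]
    have eQ0 : (∫ t in (0:ℝ)..1, Qf (hcut ε) f1 f2 g1 g2 (0, t)) = ((D - A)/2 - (SignType.sign (D - A) : ℝ) * (π/2)) -
      ((B - A)/2 - (SignType.sign (B - A) : ℝ) * (π/2)) := by
      rw [← q0]
      simp only [Qf, rr, hf.x0, hf.y0]
    have eP1 : (∫ t in (0:ℝ)..1, Pf (hcut ε) f1 f2 g1 g2 (t, 1)) = ((C - D)/2 - (SignType.sign (C - D) : ℝ) * (π/2)) -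
      ((A - D)/2 - (SignType.sign (A - D) : ℝ) * (π/2)) := by
      rw [← p1]
      congr 1; ext t
      simp only [Pf, rr, hg.x1, hg.y1]
      rw [sub_sq_comm (cos D), sub_sq_comm (sin D)]
      ring
    have eP0 : (∫ t in (0:ℝ)..1, Pf (hcut ε) f1 f2 g1 g2 (t, 0)) = ((C - B)/2 - (SignType.sign (C - B) : ℝ) * (π/2)) -
      ((A - B)/2 - (SignType.sign (A - B) : ℝ) * (π/2)) := by
      rw [← p0]
      congr 1; ext t
      simp only [Pf, rr, hg.x0, hg.y0]
      rw [sub_sq_comm (cos B), sub_sq_comm (sin B)]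
      ring
    rw [eQ1, eQ0, eP1, eP0] at hl
    have es : ∑ x ∈ Z, sg (deriv f1 x.1 * deriv g2 x.2 - deriv f2 x.1 * deriv g1 x.2) =
        - ∑ z ∈ Z, ((SignType.sign (deriv f2 z.1 * deriv g1 z.2 - deriv f1 z.1 * deriv g2 z.2) :
          SignType) : ℝ) := by
      rw [← Finset.sum_neg_distrib]
      apply Finset.sum_congr rfl
      intro z _
      rw [sg, ← neg_sub, Left.sign_neg]; simp
    rw [es, Cphi, neg_mul, ← hl]
    have sgn : ∀ u v : ℝ, ((SignType.sign (u - v) : SignType) : ℝ) = - sg (v - u) := by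
      intro u v; rw [sg, ← neg_sub, Left.sign_neg]; simp
    rw [sgn C D, sgn A D, sgn C B, sgn A B]
    simp only [sg]
    ring
  · rintro ⟨s, t⟩ hx h0
    rw [hF, Prod.mk_eq_zero] at h0
    have hs : s ∈ Icc (0:ℝ) 1 := ⟨hx.1.1, hx.2.1⟩
    have ht : t ∈ Icc (0:ℝ) 1 := ⟨hx.1.2, hx.2.2⟩
    have e1 : g1 t = f1 s := by have := h0.1; simp only at this; linarith
    have e2 : g2 t = f2 s := by have := h0.2; simp only at this; linarith
    rw [hZ]
    refine ⟨⟨lt_of_le_of_ne hs.1 ?_, lt_of_le_of_ne hs.2 ?_⟩,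
      ⟨lt_of_le_of_ne ht.1 ?_, lt_of_le_of_ne ht.2 ?_⟩, e1.symm, e2.symm⟩
    · rintro rfl
      exact hg.ne hf.hA hAB.symm hAD.symm t ht (by rw [e1, e2, hf.x0, hf.y0]; ring)
    · rintro rfl
      exact hg.ne hf.hC hCB.symm hCD.symm t ht (by rw [e1, e2, hf.x1, hf.y1]; ring)
    · rintro rfl
      exact hf.ne hg.hA hAB hCB s hs (by rw [← e1, ← e2, hg.x0, hg.y0]; ring)
    · rintro rfl
      exact hf.ne hg.hC hAD hCD s hs (by rw [← e1, ← e2, hg.x1, hg.y1]; ring)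
  · intro z hz
    have h := (hZ z).1 hz
    refine ⟨?_, ?_, ?_⟩
    · simp only [hF, h.2.2.1, h.2.2.2]; simp
    · rw [← Icc_prod_Icc]
      exact prod_mem_nhds (Icc_mem_nhds h.1.1 h.1.2) (Icc_mem_nhds h.2.1.1 h.2.1.2)
    · rw [hdet, ← neg_sub, neg_ne_zero]
      exact hT z hz

theorem inter_number {f1 f2 g1 g2 : ℝ → ℝ} {A B C D : ℝ} (hf : DArc f1 f2 A C)
    (hg : DArc g1 g2 B D)
    (hAB : A ≠ B) (hAD : A ≠ D) (hCB : C ≠ B) (hCD : C ≠ D) (Z : Finset (ℝ × ℝ))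
    (hZ : ∀ x : ℝ × ℝ, x ∈ Z ↔ x.1 ∈ Ioo (0:ℝ) 1 ∧ x.2 ∈ Ioo (0:ℝ) 1 ∧
      f1 x.1 = g1 x.2 ∧ f2 x.1 = g2 x.2)
    (hT : ∀ x ∈ Z, deriv f1 x.1 * deriv g2 x.2 - deriv f2 x.1 * deriv g1 x.2 ≠ 0) :
    2 * ∑ x ∈ Z, sg (deriv f1 x.1 * deriv g2 x.2 - deriv f2 x.1 * deriv g1 x.2) =
       sg (D - C) - sg (B - C) - sg (D - A) + sg (B - A) := by
  have hp := Real.pi_pos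
  have l1 : DArc (fun s => 2 * s - 1) (fun _ => 0) π 0 := by
    refine ⟨by fun_prop, by fun_prop, ⟨by linarith, by linarith⟩, ⟨by linarith, by linarith⟩,
      by simp, by simp, by norm_num, by simp, ?_⟩
    intro t ht; nlinarith [ht.1, ht.2]
  have l2 : DArc (fun _ => 0) (fun s => 2 * s - 1) (3*π/2) (π/2) := by
    have e : 3 * π / 2 = π / 2 + π := by ring
    refine ⟨by fun_prop, by fun_prop, ⟨by linarith, by linarith⟩, ⟨by linarith, by linarith⟩,
      by simp [e, cos_add_pi], by simp [e, sin_add_pi], by simp, by norm_num, ?_⟩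
    intro t ht; nlinarith [ht.1, ht.2]
  have h1 := inter_pre l1 l2 (by linarith) (by linarith) (by linarith) (by linarith) {(1/2,1/2)}
    (by
      rintro ⟨s, t⟩
      simp only [Finset.mem_singleton, Prod.mk.injEq, mem_Ioo]
      constructor
      · rintro ⟨rfl, rfl⟩; norm_num
      · rintro ⟨_, _, h, h'⟩; constructor <;> linarith)
    (by
      intro x _
      simp)
  have h2 := inter_pre hf hg hAB hAD hCB hCD Z hZ hT
  obtain ⟨ε, h1, h2⟩ := (h1.and h2).exists
  have e1 : sg (π / 2 - 0) = 1 := by rw [sg, sign_pos (by linarith)]; simp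
  have e2 : sg (3 * π / 2 - 0) = 1 := by rw [sg, sign_pos (by linarith)]; simp
  have e3 : sg (π / 2 - π) = -1 := by rw [sg, sign_neg (by linarith)]; simp
  have e4 : sg (3 * π / 2 - π) = 1 := by rw [sg, sign_pos (by linarith)]; simp
  rw [e1, e2, e3, e4] at h1
  have e5 : ∀ t : ℝ, deriv (fun s : ℝ => 2 * s - 1) t = 2 := by
    intro t; simp
  simp only [Finset.sum_singleton, e5, deriv_const] at h1
  have e6 : sg (2 * 2 - 0 * 0) = 1 := by rw [sg, sign_pos (by norm_num)]; simp
  rw [e6] at h1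
  have hC : Cphi ε = 2 * π := by linarith
  rw [hC] at h2
  have : π * (2 * ∑ x ∈ Z, sg (deriv f1 x.1 * deriv g2 x.2 - deriv f2 x.1 * deriv g1 x.2)) =
    π * (sg (D - C) - sg (B - C) - sg (D - A) + sg (B - A)) := by rw [← h2]; ring
  exact mul_left_cancel₀ hp.ne' this

end TD
end
end

section
open Set Metric Real
noncomputable section
namespace TD
open MeasureTheory Filter Topology

/-- Coordinate of a derivative. -/
theorem deriv_coord {f : ℝ → Plane} (hf : ContDiff ℝ (⊤ : ℕ∞) f) (k : Fin 2) (t : ℝ) :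
    deriv (fun s => f s k) t = deriv f t k := by
  have h := (hf.differentiable (by simp) t).hasDerivAt
  exact ((EuclideanSpace.proj (𝕜 := ℝ) k : Plane →L[ℝ] ℝ).hasFDerivAt.comp_hasDerivAt t h).deriv

theorem contDiff_coord {f : ℝ → Plane} (hf : ContDiff ℝ (⊤ : ℕ∞) f) (k : Fin 2) :
    ContDiff ℝ (⊤ : ℕ∞) (fun s => f s k) := contDiff_euclidean.1 hf k

def det2 (u v : Plane) : ℝ := u 0 * v 1 - u 1 * v 0

theorem norm_sq_plane (u : Plane) : ‖u‖^2 = u 0 ^2 + u 1^2 := by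
  rw [EuclideanSpace.norm_sq_eq]; simp

theorem det2_ne {u v : Plane} (h : LinearIndependent ℝ ![u, v]) : det2 u v ≠ 0 := by
  intro h0
  rw [LinearIndependent.pair_iff] at h
  have hv := h (v 0) (-(u 0)) (by
    ext k; fin_cases k
    · simp; ring
    · simp; unfold det2 at h0; linarith)
  have hv1 := h (v 1) (-(u 1)) (by
    ext k; fin_cases k
    · simp; unfold det2 at h0; linarith
    · simp; ring)
  have := h 1 1 (by
    ext k; fin_cases k
    · simp; linarith [hv.1, hv.2]
    · simp; linarith [hv1.1, hv1.2])
  simp at this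

theorem sg_mul_pos {a r : ℝ} (ha : 0 < a) : sg (a * r) = sg r := by
  rw [sg, sg, sign_mul, sign_pos ha, one_mul]

/-- The antisymmetric weight of two passages. -/
def wt : Option (Bool × ℕ) → Option (Bool × ℕ) → ℝ
  | some x, some y => if x.1 = y.1 ∧ x.2 < y.2 then 1 else 0
  | _, _ => 0

theorem wt_self (x : Option (Bool × ℕ)) : wt x x = 0 := by
  cases x <;> simp [wt]

theorem wt_bound (x y z : Option (Bool × ℕ)) :
    |wt x y - wt y x + (wt y z - wt z y) + (wt z x - wt x z)| ≤ 1 := by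
  have gen : ∀ (bx b' bz : Bool) (nx ny nz : ℕ),
      |wt (some (bx, nx)) (some (b', ny)) - wt (some (b', ny)) (some (bx, nx)) +
      (wt (some (b', ny)) (some (bz, nz)) - wt (some (bz, nz)) (some (b', ny))) +
      (wt (some (bz, nz)) (some (bx, nx)) - wt (some (bx, nx)) (some (bz, nz)))| ≤ 1 := by
    intro bx b' bz nx ny nz
    rw [abs_le]
    rcases bx <;> rcases b' <;> rcases bz <;> simp only [wt, true_and, false_and, if_false,
      reduceCtorEq] <;>
    rcases lt_trichotomy nx ny with h | h | h <;> rcases lt_trichotomy ny nz with h' | h' | h' <;>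
    rcases lt_trichotomy nx nz with h'' | h'' | h'' <;>
    first
    | (exfalso; omega)
    | (try subst h
       try subst h'
       try subst h''
       simp only [*, lt_asymm, if_true, if_false, lt_self_iff_false, not_lt_of_gt]; norm_num)
  rcases x with _ | ⟨bx, nx⟩ <;> rcases y with _ | ⟨b', ny⟩ <;> rcases z with _ | ⟨bz, nz⟩
  · simp [wt]
  · simp [wt]
  · simp [wt]
  · simp only [wt]; split_ifs <;> norm_num
  · simp [wt]
  · simp only [wt]; split_ifs <;> norm_num
  · simp only [wt]; split_ifs <;> norm_num
  · exact gen bx b' bz nx ny nz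

theorem sg_abs (r : ℝ) : |sg r| ≤ 1 := by
  unfold sg; rcases lt_trichotomy r 0 with h | h | h
  · rw [sign_neg h]; simp
  · rw [h]; simp
  · rw [sign_pos h]; simp

theorem point_bound (u1 u2 u3 : Plane) (x y z : Option (Bool × ℕ)) {a b c : ℝ} (ha : 0 < a)
    (hb : 0 < b) (hc : 0 < c) (h : a • u1 + b • u2 + c • u3 = 0) :
    wt x x * sg (det2 u1 u1) + wt x y * sg (det2 u1 u2) + wt x z * sg (det2 u1 u3) +
    (wt y x * sg (det2 u2 u1) + wt y y * sg (det2 u2 u2) + wt y z * sg (det2 u2 u3)) +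
    (wt z x * sg (det2 u3 u1) + wt z y * sg (det2 u3 u2) + wt z z * sg (det2 u3 u3)) ≤ 1 := by
  have h0 := congrArg (fun v : Plane => v 0) h
  have h1 := congrArg (fun v : Plane => v 1) h
  simp at h0 h1
  have e1 : b * det2 u1 u2 = c * det2 u3 u1 := by
    unfold det2; linear_combination u1 0 * h1 - u1 1 * h0
  have e2 : c * det2 u2 u3 = a * det2 u1 u2 := by
    unfold det2; linear_combination u2 0 * h1 - u2 1 * h0
  have s1 : sg (det2 u1 u2) = sg (det2 u3 u1) := by
    rw [← sg_mul_pos hb, e1, sg_mul_pos hc]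
  have s2 : sg (det2 u2 u3) = sg (det2 u1 u2) := by
    rw [← sg_mul_pos hc, e2, sg_mul_pos ha]
  have sn : ∀ u v, sg (det2 u v) = - sg (det2 v u) := by
    intro u v
    rw [show det2 u v = - det2 v u by unfold det2; ring, sg, sg, Left.sign_neg]; simp
  rw [sn u1 u3, sn u2 u1, sn u3 u2, s2, ← s1, wt_self, wt_self, wt_self]
  have hw := abs_le.1 (abs_mul (sg (det2 u1 u2)) _ ▸
    mul_le_one₀ (sg_abs (det2 u1 u2)) (abs_nonneg _) (wt_bound x y z))
  linarith [hw.2]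

variable {n nl : ℕ}

theorem mul_sg_aux {n : ℕ} (hn : 1 ≤ n) (x y : ℕ) :
    sg ((x:ℝ) * π / n - (y:ℝ) * π / n) = sg ((x:ℝ) - y) := by
  have hn' : (0:ℝ) < n := by exact_mod_cast hn
  have : (x:ℝ) * π / n - (y:ℝ) * π / n = (π / n) * ((x:ℝ) - y) := by ring
  rw [this, sg_mul_pos (by have := Real.pi_pos; positivity)]

theorem ang_mem {n k : ℕ} (hk : k < 2 * n) : (k:ℝ) * π / n ∈ Ico 0 (2 * π) := by
  have hn' : (0:ℝ) < n := by exact_mod_cast (by omega : 0 < n)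
  have hp := Real.pi_pos
  refine ⟨by positivity, ?_⟩
  rw [div_lt_iff₀ hn']
  have : (k:ℝ) < 2 * n := by exact_mod_cast hk
  nlinarith

theorem ang_ne {n k l : ℕ} (hn : 1 ≤ n) (hkl : k ≠ l) : (k:ℝ) * π / n ≠ (l:ℝ) * π / n := by
  have hn' : (0:ℝ) < n := by exact_mod_cast hn
  have hp := Real.pi_pos
  intro h
  have h1 : (k:ℝ) * π = (l:ℝ) * π := by
    field_simp at h; rw [h]
  exact hkl (by exact_mod_cast mul_right_cancel₀ hp.ne' h1)

theorem arc_DArc (hn : 1 ≤ n) (D : TripleDiagram n nl) {σ : Equiv.Perm (Fin n)}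
    (hR : Realizes D σ) (i : Fin n) :
    DArc (fun t => D.arc i t 0) (fun t => D.arc i t 1)
      (((2 * (i:ℕ) : ℕ) : ℝ) * π / n) (((2 * (σ i:ℕ) + 1 : ℕ) : ℝ) * π / n) := by
  refine ⟨contDiff_coord (D.arc_smooth i) 0, contDiff_coord (D.arc_smooth i) 1,
    ang_mem (by omega), ang_mem (by omega), ?_, ?_, ?_, ?_, ?_⟩
  · simp only [(hR i).1]; rfl
  · simp only [(hR i).1]; rfl
  · simp only [(hR i).2]; rfl
  · simp only [(hR i).2]; rfl
  · intro t ht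
    have := D.arc_interior i t ht
    rw [← norm_sq_plane]
    nlinarith [norm_nonneg (D.arc i t)]

def cls (σ : Equiv.Perm (Fin n)) (i : Fin n) : Bool := decide (i ≤ σ i)

def key (σ : Equiv.Perm (Fin n)) : (Fin n × ℝ) ⊕ (Fin nl × ℝ) → Option (Bool × ℕ)
  | Sum.inl q => some (cls σ q.1, (q.1 : ℕ))
  | Sum.inr _ => none

def Ccond (σ : Equiv.Perm (Fin n)) (i j : Fin n) : Prop :=
  (j ≤ σ i ∧ σ i < σ j) ∨ (σ i < σ j ∧ σ j < i)

instance (σ : Equiv.Perm (Fin n)) (i j : Fin n) : Decidable (Ccond σ i j) := by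
  unfold Ccond; infer_instance

theorem sgn_eval (x y : ℕ) : sg ((x:ℝ) - y) = if y < x then 1 else if x < y then -1 else 0 := by
  unfold sg
  split_ifs with h1 h2
  · rw [sign_pos (sub_pos.2 (by exact_mod_cast h1))]; simp
  · rw [sign_neg (sub_neg.2 (by exact_mod_cast h2))]; simp
  · have : x = y := by omega
    simp [this]

theorem inter_comb (σ : Equiv.Perm (Fin n)) (i j : Fin n) (hij : i < j) (hc : cls σ i = cls σ j)
    (I : ℝ) (hI : 2 * I = sg (((2 * (σ j:ℕ) + 1 : ℕ):ℝ) - ((2 * (σ i:ℕ) + 1 : ℕ):ℝ))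
      - sg (((2 * (j:ℕ) : ℕ):ℝ) - ((2 * (σ i:ℕ) + 1 : ℕ):ℝ))
      - sg (((2 * (σ j:ℕ) + 1 : ℕ):ℝ) - ((2 * (i:ℕ) : ℕ):ℝ))
      + sg (((2 * (j:ℕ) : ℕ):ℝ) - ((2 * (i:ℕ) : ℕ):ℝ))) :
    I = if Ccond σ i j then 1 else 0 := by
  have hne : (σ i : ℕ) ≠ σ j := by
    intro h; exact hij.ne (σ.injective (Fin.ext h))
  simp only [sgn_eval] at hI
  simp only [cls, decide_eq_decide, Fin.le_def] at hc
  simp only [Ccond, Fin.le_def, Fin.lt_def] at *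
  by_cases c1 : (i:ℕ) ≤ σ i <;> by_cases c2 : (σ i : ℕ) < σ j <;> by_cases c3 : (j:ℕ) ≤ σ i <;>
    by_cases c4 : (σ j : ℕ) < i <;> have c5 := hc.1 <;> have c6 := hc.2 <;>
    first
    | (exfalso; omega)
    | (repeat rw [if_pos (by omega)] at hI
       repeat (first | rw [if_pos (by omega)] at hI | rw [if_neg (by omega)] at hI)
       first | rw [if_pos (by omega)] | rw [if_neg (by omega)]
       linarith)

theorem Ncross_eq (σ : Equiv.Perm (Fin n)) :
    Ncross n σ = (Finset.univ.filter fun ij : Fin n × Fin n =>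
      (ij.1 < ij.2 ∧ cls σ ij.1 = cls σ ij.2) ∧ Ccond σ ij.1 ij.2).card := by
  unfold Ncross
  apply Finset.card_bij (fun ij _ => if ij.1 < ij.2 then ij else (ij.2, ij.1))
  · rintro ⟨i, j⟩ h
    simp only [Finset.mem_filter, Finset.mem_univ, true_and, cls, decide_eq_decide, Ccond,
      Fin.lt_def, Fin.le_def] at h ⊢
    split_ifs with h1 <;> simp only <;> omega
  · rintro ⟨i, j⟩ h ⟨k, l⟩ h'
    simp only [Finset.mem_filter, Finset.mem_univ, true_and, 
      Fin.lt_def] at h h' ⊢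
    split_ifs with h1 h2 h2
    · exact id
    · intro e; simp only [Prod.mk.injEq] at e; obtain ⟨rfl, rfl⟩ := e; exfalso; omega
    · intro e; simp only [Prod.mk.injEq] at e; obtain ⟨rfl, rfl⟩ := e; exfalso; omega
    · intro e; simp only [Prod.mk.injEq] at e; obtain ⟨rfl, rfl⟩ := e; rfl
  · rintro ⟨i, j⟩ h
    simp only [Finset.mem_filter, Finset.mem_univ, true_and, cls, decide_eq_decide, Ccond,
      Fin.lt_def, Fin.le_def] at h
    by_cases c : (i:ℕ) ≤ σ i
    · refine ⟨(i, j), ?_, ?_⟩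
      · simp only [Finset.mem_filter, Finset.mem_univ, true_and, ne_eq, Fin.ext_iff]; omega
      · rw [if_pos (Fin.lt_def.2 h.1.1)]
    · refine ⟨(j, i), ?_, ?_⟩
      · simp only [Finset.mem_filter, Finset.mem_univ, true_and, ne_eq, Fin.ext_iff]; omega
      · rw [if_neg]; simp only [Fin.lt_def]; omega


theorem lower_bound (hn : 1 ≤ n) (σ : Equiv.Perm (Fin n)) (D : TripleDiagram n nl)
    (hR : Realizes D σ) : Ncross n σ ≤ D.tripleCount := by
  classical
  set M := D.multiple_finite.toFinset with hM
  have hMm : ∀ p, p ∈ M ↔ D.IsMultiplePoint p := by intro p; simp [hM]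
  have hpf : ∀ p, D.IsMultiplePoint p → (D.passages p).Finite := by
    intro p hp; apply Set.finite_of_ncard_ne_zero; rw [D.triple p hp]; norm_num
  let P : Plane → Finset ((Fin n × ℝ) ⊕ (Fin nl × ℝ)) := fun p =>
    if hp : D.IsMultiplePoint p then (hpf p hp).toFinset else ∅
  have hP : ∀ p, D.IsMultiplePoint p → ∀ q, q ∈ P p ↔ q ∈ D.passages p := by
    intro p hp q; simp [P, hp]
  -- two arcs meeting
  have hmeet : ∀ i j s t, i ≠ j → s ∈ Ioo (0:ℝ) 1 → t ∈ Ioo (0:ℝ) 1 → D.arc i s = D.arc j t →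
      D.IsMultiplePoint (D.arc i s) ∧ Sum.inl (i, s) ∈ D.passages (D.arc i s) ∧
      Sum.inl (j, t) ∈ D.passages (D.arc i s) := by
    intro i j s t hij hs ht h
    have h1 : Sum.inl (i, s) ∈ D.passages (D.arc i s) := ⟨hs, rfl⟩
    have h2 : Sum.inl (j, t) ∈ D.passages (D.arc i s) := ⟨ht, h.symm⟩
    refine ⟨fun hsub => ?_, h1, h2⟩
    have := hsub h1 h2
    simp [hij] at this
  have hZf : ∀ i j, i ≠ j → {x : ℝ × ℝ | x.1 ∈ Ioo (0:ℝ) 1 ∧ x.2 ∈ Ioo (0:ℝ) 1 ∧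
      D.arc i x.1 = D.arc j x.2}.Finite := by
    intro i j hij
    have : Set.InjOn (fun x : ℝ × ℝ => ((Sum.inl (i, x.1), Sum.inl (j, x.2)) :
      ((Fin n × ℝ) ⊕ (Fin nl × ℝ)) × ((Fin n × ℝ) ⊕ (Fin nl × ℝ)))) {x : ℝ × ℝ |
        x.1 ∈ Ioo (0:ℝ) 1 ∧ x.2 ∈ Ioo (0:ℝ) 1 ∧ D.arc i x.1 = D.arc j x.2} := by
      rintro ⟨s, t⟩ _ ⟨s', t'⟩ _ h
      simpa using h
    refine Set.Finite.of_finite_image ?_ this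
    refine (M.biUnion (fun p => P p ×ˢ P p)).finite_toSet.subset ?_
    rintro _ ⟨⟨s, t⟩, ⟨hs, ht, h⟩, rfl⟩
    obtain ⟨h0, h1, h2⟩ := hmeet i j s t hij hs ht h
    simp only [Finset.coe_biUnion, Set.mem_iUnion]
    refine ⟨D.arc i s, (hMm _).2 h0, ?_⟩
    simp only [Finset.coe_product, Set.mem_prod, Finset.mem_coe]
    exact ⟨(hP _ h0 _).2 h1, (hP _ h0 _).2 h2⟩
  let Z : Fin n × Fin n → Finset (ℝ × ℝ) := fun ij =>
    if h : ij.1 ≠ ij.2 then (hZf ij.1 ij.2 h).toFinset else ∅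
  have hZ : ∀ i j, i ≠ j → ∀ x : ℝ × ℝ, x ∈ Z (i, j) ↔
      x.1 ∈ Ioo (0:ℝ) 1 ∧ x.2 ∈ Ioo (0:ℝ) 1 ∧ D.arc i x.1 = D.arc j x.2 := by
    intro i j hij x; simp [Z, hij]
  let T : Finset (Fin n × Fin n) := Finset.univ.filter fun ij =>
      (ij.1 < ij.2 ∧ cls σ ij.1 = cls σ ij.2)
  have hI : ∀ ij ∈ T, ∑ x ∈ Z ij, sg (det2 (deriv (D.arc ij.1) x.1) (deriv (D.arc ij.2) x.2)) =
      if Ccond σ ij.1 ij.2 then 1 else 0 := by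
    rintro ⟨i, j⟩ hij
    simp only [T, Finset.mem_filter, Finset.mem_univ, true_and] at hij
    have hne : i ≠ j := hij.1.ne
    have hσ : (σ i : ℕ) ≠ σ j := by
      intro h; exact hne (σ.injective (Fin.ext h))
    have hne' : (i : ℕ) ≠ j := fun h => hne (Fin.ext h)
    apply inter_comb σ i j hij.1 hij.2
    rw [← mul_sg_aux hn, ← mul_sg_aux hn, ← mul_sg_aux hn, ← mul_sg_aux hn]
    have := inter_number (arc_DArc hn D hR i) (arc_DArc hn D hR j) (ang_ne hn (by omega))
      (ang_ne hn (by omega)) (ang_ne hn (by omega)) (ang_ne hn (by omega)) (Z (i, j))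
      (by
        intro x
        rw [hZ i j hne]
        refine and_congr_right fun _ => and_congr_right fun _ => ⟨fun h => by simp [h], fun h => ?_⟩
        ext k; fin_cases k
        · exact h.1
        · exact h.2)
      (by
        intro x hx
        obtain ⟨hs, ht, h⟩ := (hZ i j hne x).1 hx
        obtain ⟨h0, h1, h2⟩ := hmeet i j x.1 x.2 hne hs ht h
        have := det2_ne (D.branches_transverse _ h0 _ h1 _ h2 (by simp [hne]))
        simp only [deriv_coord (D.arc_smooth _)]
        exact this)
    simp only [deriv_coord (D.arc_smooth _)] at this
    exact this
  have hsum : (Ncross n σ : ℝ) = ∑ ij ∈ T, ∑ x ∈ Z ij,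
      sg (det2 (deriv (D.arc ij.1) x.1) (deriv (D.arc ij.2) x.2)) := by
    rw [Finset.sum_congr rfl hI, Finset.sum_boole, Ncross_eq, Finset.filter_filter]
  have hsum2 : ∑ ij ∈ T, ∑ x ∈ Z ij,
      sg (det2 (deriv (D.arc ij.1) x.1) (deriv (D.arc ij.2) x.2)) =
      ∑ p ∈ M, ∑ q ∈ P p ×ˢ P p, wt (key σ q.1) (key σ q.2) *
        sg (det2 (D.tangent q.1) (D.tangent q.2)) := by
    rw [Finset.sum_sigma', Finset.sum_sigma']
    refine Finset.sum_bij_ne_zero (fun x _ _ => ⟨D.arc x.1.1 x.2.1,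
      (Sum.inl (x.1.1, x.2.1), Sum.inl (x.1.2, x.2.2))⟩) ?_ ?_ ?_ ?_
    · rintro ⟨⟨i, j⟩, ⟨s, t⟩⟩ h _
      simp only [Finset.mem_sigma, T, Finset.mem_filter, Finset.mem_univ, true_and] at h
      obtain ⟨hs, ht, h'⟩ := (hZ i j h.1.1.ne _).1 h.2
      obtain ⟨h0, h1, h2⟩ := hmeet i j s t h.1.1.ne hs ht h'
      simp only [Finset.mem_sigma, Finset.mem_product]
      exact ⟨(hMm _).2 h0, (hP _ h0 _).2 h1, (hP _ h0 _).2 h2⟩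
    · rintro ⟨⟨i, j⟩, ⟨s, t⟩⟩ _ _ ⟨⟨i', j'⟩, ⟨s', t'⟩⟩ _ _ h
      simp only [Sigma.mk.injEq, heq_eq_eq, Prod.mk.injEq, Sum.inl.injEq] at h ⊢
      tauto
    · rintro ⟨p, ⟨q, q'⟩⟩ h hne
      simp only [Finset.mem_sigma, Finset.mem_product] at h
      have hp := (hMm _).1 h.1
      have h1 := (hP _ hp _).1 h.2.1
      have h2 := (hP _ hp _).1 h.2.2
      have hw : wt (key σ q) (key σ q') ≠ 0 := left_ne_zero_of_mul hne
      rcases q with ⟨i, s⟩ | ⟨i, s⟩ <;> rcases q' with ⟨j, t⟩ | ⟨j, t⟩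
      · simp only [key, wt, ne_eq, ite_eq_right_iff, one_ne_zero, imp_false, not_not] at hw
        have hij : i < j := hw.2
        have h1 : s ∈ Ioo (0:ℝ) 1 ∧ D.arc i s = p := h1
        have h2 : t ∈ Ioo (0:ℝ) 1 ∧ D.arc j t = p := h2
        refine ⟨⟨(i, j), (s, t)⟩, ?_, ?_, ?_⟩
        · simp only [Finset.mem_sigma, T, Finset.mem_filter, Finset.mem_univ, true_and]
          exact ⟨⟨hij, hw.1⟩, (hZ i j hij.ne _).2 ⟨h1.1, h2.1, h1.2.trans h2.2.symm⟩⟩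
        · exact right_ne_zero_of_mul hne
        · simp [h1.2]
      all_goals simp [key, wt] at hw
    · rintro ⟨⟨i, j⟩, ⟨s, t⟩⟩ h _
      simp only [Finset.mem_sigma, T, Finset.mem_filter, Finset.mem_univ, true_and] at h
      have : wt (key (nl := nl) σ (Sum.inl (i, s))) (key (nl := nl) σ (Sum.inl (j, t))) = 1 := by
        simp only [key, wt]
        rw [if_pos]
        exact ⟨h.1.2, h.1.1⟩
      simp only [this, one_mul]
      rfl
  have hpt : ∀ p ∈ M, ∑ q ∈ P p ×ˢ P p, wt (key σ q.1) (key σ q.2) *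
        sg (det2 (D.tangent q.1) (D.tangent q.2)) ≤ 1 := by
    intro p hp
    have hp := (hMm p).1 hp
    obtain ⟨q1, q2, q3, hq, a, b, c, ha, hb, hc, hrel⟩ := D.alternating p hp
    have h3 := D.triple p hp
    rw [hq] at h3
    have hPe : P p = {q1, q2, q3} := by
      ext q; rw [hP p hp, hq]; simp
    have h12 : q1 ≠ q2 := by
      rintro rfl
      have := Set.ncard_insert_le q1 {q3}
      simp only [Set.insert_eq_of_mem, Set.mem_insert_iff, true_or] at h3
      simp at this; omega
    have h13 : q1 ≠ q3 := by
      rintro rfl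
      have := Set.ncard_insert_le q2 {q1}
      rw [Set.insert_eq_of_mem (by simp)] at h3
      simp at this; omega
    have h23 : q2 ≠ q3 := by
      rintro rfl
      have := Set.ncard_insert_le q1 {q2}
      simp at this h3; omega
    rw [Finset.sum_product, hPe]
    have ex : ∀ F : ((Fin n × ℝ) ⊕ (Fin nl × ℝ)) → ℝ, ∑ q ∈ ({q1, q2, q3} : Finset _), F q =
        F q1 + F q2 + F q3 := by
      intro F
      rw [Finset.sum_insert (by simp [h12, h13]), Finset.sum_insert (by simp [h23]),
        Finset.sum_singleton]; ring
    simp only [ex]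
    exact point_bound _ _ _ _ _ _ ha hb hc hrel
  have hfin : (Ncross n σ : ℝ) ≤ (M.card : ℝ) := by
    rw [hsum, hsum2]
    refine (Finset.sum_le_sum hpt).trans ?_
    simp
  have : D.tripleCount = M.card := by
    rw [TripleDiagram.tripleCount, Set.ncard_eq_toFinset_card _ D.multiple_finite]
  rw [this]
  exact_mod_cast hfin

end TD
end
end

section
open Set Metric Real
noncomputable section
namespace TD

/-- the smooth step -/
def st (x : ℝ) : ℝ := Real.smoothTransition x

theorem st_smooth : ContDiff ℝ (⊤ : ℕ∞) st := Real.smoothTransition.contDiff (n := ⊤)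

theorem st_zero {x : ℝ} (h : x ≤ 0) : st x = 0 := Real.smoothTransition.zero_of_nonpos h
theorem st_one {x : ℝ} (h : 1 ≤ x) : st x = 1 := Real.smoothTransition.one_of_one_le h
theorem st_nonneg (x : ℝ) : 0 ≤ st x := Real.smoothTransition.nonneg x
theorem st_le_one (x : ℝ) : st x ≤ 1 := Real.smoothTransition.le_one x

theorem st_deriv_pos {x : ℝ} (h0 : 0 < x) (h1 : x < 1) : 0 < deriv st x := by
  have ev : st =ᶠ[nhds x] fun y => Real.exp (-y⁻¹) / (Real.exp (-y⁻¹) + Real.exp (-(1 - y)⁻¹)) := by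
    filter_upwards [eventually_gt_nhds h0, eventually_lt_nhds h1] with y hy0 hy1
    simp only [st, Real.smoothTransition, expNegInvGlue]
    rw [if_neg (by linarith), if_neg (by linarith)]
  rw [ev.deriv_eq]
  have e1 : HasDerivAt (fun y : ℝ => Real.exp (-y⁻¹)) (Real.exp (-x⁻¹) * (- (-(x^2)⁻¹))) x :=
    ((hasDerivAt_inv h0.ne').neg).exp
  have e2 : HasDerivAt (fun y : ℝ => Real.exp (-(1 - y)⁻¹))
      (Real.exp (-(1 - x)⁻¹) * (- (-(-1) / (1 - x)^2))) x := by
    have := ((((hasDerivAt_id x).const_sub 1).fun_inv (by simp; linarith)).neg).exp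
    simpa using this
  have hp1 := Real.exp_pos (-x⁻¹)
  have hp2 := Real.exp_pos (-(1-x)⁻¹)
  have := e1.div (e1.add e2) (by simp only [Pi.add_apply]; positivity)
  erw [this.deriv]
  simp only [Pi.add_apply]
  apply div_pos _ (by positivity)
  have hx : 0 < (x^2)⁻¹ := by positivity
  have hy : 0 < 1 / (1-x)^2 := by have : 0 < 1 - x := by linarith
                                  positivity
  have : rexp (-x⁻¹) * (- (-(x ^ 2)⁻¹)) * (rexp (-x⁻¹) + rexp (-(1 - x)⁻¹)) -
      rexp (-x⁻¹) * (rexp (-x⁻¹) * (- (-(x ^ 2)⁻¹)) + rexp (-(1 - x)⁻¹) * (- (-(-1) / (1 - x) ^ 2)))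
      = rexp (-x⁻¹) * rexp (-(1 - x)⁻¹) * ((x^2)⁻¹ + 1 / (1-x)^2) := by ring
  rw [this]
  positivity

theorem st_strictMono : StrictMonoOn st (Icc 0 1) := by
  apply strictMonoOn_of_deriv_pos (convex_Icc 0 1) st_smooth.continuous.continuousOn
  intro x hx
  rw [interior_Icc] at hx
  exact st_deriv_pos hx.1 hx.2

theorem st_half : st (1/2) = 1/2 := by
  simp only [st, Real.smoothTransition, expNegInvGlue]
  rw [if_neg (by norm_num), if_neg (by norm_num)]
  have := Real.exp_pos (-(1/2:ℝ)⁻¹)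
  norm_num
  field_simp
  norm_num

theorem st_mem {x : ℝ} (h0 : 0 < x) (h1 : x < 1) : 0 < st x ∧ st x < 1 := by
  constructor
  · have := st_strictMono (by simp : (0:ℝ) ∈ Icc (0:ℝ) 1) (⟨h0.le, h1.le⟩ : x ∈ Icc (0:ℝ) 1) h0
    rwa [st_zero le_rfl] at this
  · have := st_strictMono (⟨h0.le, h1.le⟩ : x ∈ Icc (0:ℝ) 1) (by simp : (1:ℝ) ∈ Icc (0:ℝ) 1) h1
    rwa [st_one le_rfl] at this

theorem st_eq_half {x : ℝ} : st x = 1/2 ↔ x = 1/2 := by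
  constructor
  · intro h
    rcases le_or_gt x 0 with h0 | h0
    · rw [st_zero h0] at h; norm_num at h
    rcases le_or_gt 1 x with h1 | h1
    · rw [st_one h1] at h; norm_num at h
    apply st_strictMono.injOn ⟨h0.le, h1.le⟩ (by constructor <;> norm_num)
    rw [h, st_half]
  · rintro rfl; exact st_half

theorem st_inj {x y : ℝ} (hx0 : 0 < x) (hx1 : x < 1) (h : st x = st y) : x = y := by
  have hm := st_mem hx0 hx1
  rcases le_or_gt y 0 with h0 | h0
  · rw [st_zero h0] at h; linarith
  rcases le_or_gt 1 y with h1 | h1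
  · rw [st_one h1] at h; linarith
  exact st_strictMono.injOn ⟨hx0.le, hx1.le⟩ ⟨h0.le, h1.le⟩ h

end TD
end
end

section
open Set Metric Real
noncomputable section
namespace TD
open Filter Topology

/-- Distinct positions on a line. -/
structure Pos {ι : Type} (S : Finset ι) (a c : ι → ℝ) (L R : ℝ) : Prop where
  ia : ∀ i ∈ S, ∀ j ∈ S, a i = a j → i = j
  ic : ∀ i ∈ S, ∀ j ∈ S, c i = c j → i = j
  ac : ∀ i ∈ S, ∀ j ∈ S, a i ≠ c j
  ba : ∀ i ∈ S, L ≤ a i ∧ a i ≤ R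
  bc : ∀ i ∈ S, L ≤ c i ∧ c i ≤ R

/-- passages of a family of curves -/
def LP {ι : Type} (S : Finset ι) (X Y : ι → ℝ → ℝ) (p : ℝ × ℝ) : Set (ι × ℝ) :=
  {q | q.1 ∈ S ∧ X q.1 q.2 = p.1 ∧ Y q.1 q.2 = p.2}

def Mult {ι : Type} (S : Finset ι) (X Y : ι → ℝ → ℝ) : Set (ℝ × ℝ) :=
  {p | ¬ (LP S X Y p).Subsingleton}

def dt {ι : Type} (X Y : ι → ℝ → ℝ) (q q' : ι × ℝ) : ℝ :=
  deriv (X q.1) q.2 * deriv (Y q'.1) q'.2 - deriv (Y q.1) q.2 * deriv (X q'.1) q'.2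

/-- good triple points -/
def Good {ι : Type} (S : Finset ι) (X Y : ι → ℝ → ℝ) (p : ℝ × ℝ) : Prop :=
  ∃ q1 q2 q3, LP S X Y p = {q1, q2, q3} ∧ q1 ≠ q2 ∧ q1 ≠ q3 ∧ q2 ≠ q3 ∧ dt X Y q1 q2 ≠ 0 ∧
    ∃ a b c : ℝ, 0 < a ∧ 0 < b ∧ 0 < c ∧
      a * deriv (X q1.1) q1.2 + b * deriv (X q2.1) q2.2 + c * deriv (X q3.1) q3.2 = 0 ∧
      a * deriv (Y q1.1) q1.2 + b * deriv (Y q2.1) q2.2 + c * deriv (Y q3.1) q3.2 = 0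

theorem Good.congr {ι : Type} {S S' : Finset ι} {X Y X' Y' : ι → ℝ → ℝ} {p : ℝ × ℝ}
    (h : Good S X Y p) (hL : LP S' X' Y' p = LP S X Y p)
    (hd : ∀ q ∈ LP S X Y p, deriv (X' q.1) q.2 = deriv (X q.1) q.2 ∧
      deriv (Y' q.1) q.2 = deriv (Y q.1) q.2) : Good S' X' Y' p := by
  obtain ⟨q1, q2, q3, h0, h12, h13, h23, hdt, a, b, c, ha, hb, hc, e1, e2⟩ := h
  have d1 := hd q1 (by rw [h0]; simp)
  have d2 := hd q2 (by rw [h0]; simp)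
  have d3 := hd q3 (by rw [h0]; simp)
  refine ⟨q1, q2, q3, hL.trans h0, h12, h13, h23, ?_, a, b, c, ha, hb, hc, ?_, ?_⟩
  · rw [dt, d1.1, d1.2, d2.1, d2.2]; exact hdt
  · rw [d1.1, d2.1, d3.1]; exact e1
  · rw [d1.2, d2.2, d3.2]; exact e2

/-- Diagrams in the plane whose strands come from below and go back below. -/
structure LD {ι : Type} (S : Finset ι) (a c : ι → ℝ) (L R M : ℝ) (X Y : ι → ℝ → ℝ) : Prop where
  hM : 0 < M
  sx : ∀ i ∈ S, ContDiff ℝ (⊤ : ℕ∞) (X i)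
  sy : ∀ i ∈ S, ContDiff ℝ (⊤ : ℕ∞) (Y i)
  imm : ∀ i ∈ S, ∀ t, deriv (X i) t ≠ 0 ∨ deriv (Y i) t ≠ 0
  left : ∀ i ∈ S, ∀ t ≤ -M, X i t = a i ∧ Y i t = t
  right : ∀ i ∈ S, ∀ t, M ≤ t → X i t = c i ∧ Y i t = -t
  mid : ∀ i ∈ S, ∀ t, -M < t → t < M → -M < Y i t
  bx : ∀ i ∈ S, ∀ t, L ≤ X i t ∧ X i t ≤ R
  fin : (Mult S X Y).Finite
  good : ∀ p ∈ Mult S X Y, Good S X Y p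

theorem LD.low {ι : Type} {S : Finset ι} {a c : ι → ℝ} {L R M : ℝ} {X Y : ι → ℝ → ℝ}
    (h : LD S a c L R M X Y) {i : ι} (hi : i ∈ S) {t : ℝ} (hY : Y i t ≤ -M) :
    (t = Y i t ∧ X i t = a i) ∨ (t = - Y i t ∧ X i t = c i) := by
  rcases le_or_gt t (-M) with h1 | h1
  · left; have := h.left i hi t h1; exact ⟨this.2.symm, this.1⟩
  rcases le_or_gt M t with h2 | h2
  · right; have := h.right i hi t h2; exact ⟨by rw [this.2]; ring, this.1⟩
  have := h.mid i hi t h1 h2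
  linarith

theorem LD.mult_low {ι : Type} {S : Finset ι} {a c : ι → ℝ} {L R M : ℝ} {X Y : ι → ℝ → ℝ}
    (h : LD S a c L R M X Y) (hP : Pos S a c L R) {p : ℝ × ℝ} (hp : p.2 ≤ -M) :
    (LP S X Y p).Subsingleton := by
  rintro ⟨i, t⟩ ⟨hi, hx, hy⟩ ⟨j, s⟩ ⟨hj, hx', hy'⟩
  simp only at hi hx hy hj hx' hy'
  have h1 := h.low hi (t := t) (by rw [hy]; exact hp)
  have h2 := h.low hj (t := s) (by rw [hy']; exact hp)
  rw [hx, hy] at h1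
  rw [hx', hy'] at h2
  rcases h1 with ⟨e1, e2⟩ | ⟨e1, e2⟩ <;> rcases h2 with ⟨e3, e4⟩ | ⟨e3, e4⟩
  · rw [hP.ia i hi j hj (e2.symm.trans e4), e1, e3]
  · exact absurd (e2.symm.trans e4) (hP.ac i hi j hj)
  · exact absurd (e4.symm.trans e2) (hP.ac j hj i hi)
  · rw [hP.ic i hi j hj (e2.symm.trans e4), e1, e3]

theorem LD.derivY {ι : Type} {S : Finset ι} {a c : ι → ℝ} {L R M : ℝ} {X Y : ι → ℝ → ℝ}
    (h : LD S a c L R M X Y) {i : ι} (hi : i ∈ S) {t : ℝ} :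
    (t < -M → deriv (Y i) t = 1) ∧ (M < t → deriv (Y i) t = -1) := by
  constructor
  · intro ht
    have : Y i =ᶠ[𝓝 t] fun x => x := by
      filter_upwards [eventually_lt_nhds ht] with x hx using (h.left i hi x hx.le).2
    rw [this.deriv_eq]; simp
  · intro ht
    have : Y i =ᶠ[𝓝 t] fun x => -x := by
      filter_upwards [eventually_gt_nhds ht] with x hx using (h.right i hi x hx.le).2
    rw [this.deriv_eq]; simp

set_option maxHeartbeats 2000000 in
theorem swap_layer {ι : Type} [DecidableEq ι] {S : Finset ι} {a c : ι → ℝ} {L R M : ℝ}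
    {X Y : ι → ℝ → ℝ} (hP : Pos S a c L R) {i j k : ι} (hi : i ∈ S) (hj : j ∈ S) (hk : k ∈ S)
    (hik : a i < c k) (hkj : c k < a j)
    (ha : ∀ l ∈ S, l = i ∨ l = j ∨ a l < a i ∨ a j < a l)
    (hc : ∀ l ∈ S, l = k ∨ c l < a i ∨ a j < c l)
    (hP' : Pos S (a ∘ Equiv.swap i j) (Function.update c k (a i + a j - c k)) L R)
    (h : LD S (a ∘ Equiv.swap i j) (Function.update c k (a i + a j - c k)) L R M X Y) :
    ∃ X', LD S a c L R (M + 2) X' Y ∧ (Mult S X' Y).ncard = (Mult S X Y).ncard + 1 := by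
  set a' := a ∘ Equiv.swap i j with ha'
  set c' := Function.update c k (a i + a j - c k) with hc'
  have hM := h.hM
  have hij : i ≠ j := by rintro rfl; linarith
  have ai : a' i = a j := by simp [ha']
  have aj : a' j = a i := by simp [ha']
  have al : ∀ l, l ≠ i → l ≠ j → a' l = a l := by
    intro l h1 h2; simp [ha', Equiv.swap_apply_of_ne_of_ne h1 h2]
  have ck : c' k = a i + a j - c k := by simp [hc']
  have cl : ∀ l, l ≠ k → c' l = c l := by
    intro l h1; simp [hc', h1]
  set X' : ι → ℝ → ℝ := fun l t => X l t + (a l - a' l) * (1 - st (t + M + 2)) +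
    (c l - c' l) * (1 - st (-t + M + 2)) with hX'
  -- values of the new curves
  have vmid : ∀ l t, -M - 1 ≤ t → t ≤ M + 1 → X' l t = X l t := by
    intro l t h1 h2
    simp only [hX']
    rw [st_one (by linarith), st_one (by linarith)]; ring
  have vleft : ∀ l ∈ S, ∀ t ≤ -M, X' l t = a' l + (a l - a' l) * (1 - st (t + M + 2)) := by
    intro l hl t h1
    simp only [hX']
    rw [st_one (x := -t + M + 2) (by linarith), (h.left l hl t h1).1]; ring
  have vright : ∀ l ∈ S, ∀ t, M ≤ t → X' l t = c' l + (c l - c' l) * (1 - st (-t + M + 2)) := by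
    intro l hl t h1
    simp only [hX']
    rw [st_one (x := t + M + 2) (by linarith), (h.right l hl t h1).1]; ring
  have dmid : ∀ l t, -M - 1 < t → t < M + 1 → deriv (X' l) t = deriv (X l) t := by
    intro l t h1 h2
    apply Filter.EventuallyEq.deriv_eq
    filter_upwards [eventually_gt_nhds h1, eventually_lt_nhds h2] with x hx hx'
    exact vmid l x hx.le hx'.le
  have stcd : ContDiff ℝ (⊤ : ℕ∞) st := st_smooth
  -- passages above
  have Lup : ∀ p : ℝ × ℝ, -M - 1 ≤ p.2 → LP S X' Y p = LP S X Y p := by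
    intro p hp
    ext ⟨l, t⟩
    simp only [LP, mem_ofPred_eq]
    refine and_congr_right fun hl => ?_
    have key : Y l t = p.2 → X' l t = X l t := by
      intro hY
      apply vmid
      · by_contra hcon
        have := (h.left l hl t (by linarith)).2
        linarith
      · by_contra hcon
        have := (h.right l hl t (by linarith)).2
        linarith
    constructor
    · rintro ⟨h1, h2⟩; rw [key h2] at h1; exact ⟨h1, h2⟩
    · rintro ⟨h1, h2⟩; rw [key h2]; exact ⟨h1, h2⟩
  -- classification of low passages
  have Llow : ∀ p : ℝ × ℝ, p.2 < -M - 1 → ∀ q ∈ LP S X' Y p,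
      (q = (i, p.2) ∧ p.1 = a j + (a i - a j) * (1 - st (p.2 + M + 2))) ∨
      (q = (j, p.2) ∧ p.1 = a i + (a j - a i) * (1 - st (p.2 + M + 2))) ∨
      (q = (k, -p.2) ∧ p.1 = a i + a j - c k + (c k - (a i + a j - c k)) *
        (1 - st (p.2 + M + 2))) ∨
      (q.2 = p.2 ∧ q.1 ∈ S ∧ a q.1 = p.1 ∧ (p.1 < a i ∨ a j < p.1)) ∨
      (q.2 = -p.2 ∧ q.1 ∈ S ∧ c q.1 = p.1 ∧ (p.1 < a i ∨ a j < p.1)) := by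
    rintro p hp ⟨l, t⟩ ⟨hl, hx, hy⟩
    simp only at hl hx hy
    rcases h.low hl (t := t) (by linarith) with ⟨e1, -⟩ | ⟨e1, -⟩
    · rw [hy] at e1
      subst e1
      rw [vleft l hl _ (by linarith)] at hx
      by_cases h1 : l = i
      · subst h1; left; rw [ai] at hx; exact ⟨rfl, hx.symm⟩
      by_cases h2 : l = j
      · subst h2; right; left; rw [aj] at hx; exact ⟨rfl, hx.symm⟩
      right; right; right; left
      rw [al l h1 h2] at hx
      have hx : a l = p.1 := by linarith
      refine ⟨rfl, hl, hx, ?_⟩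
      rw [← hx]
      rcases ha l hl with h | h | h | h
      · exact absurd h h1
      · exact absurd h h2
      · exact Or.inl h
      · exact Or.inr h
    · rw [hy] at e1
      subst e1
      rw [vright l hl _ (by linarith), neg_neg] at hx
      by_cases h1 : l = k
      · subst h1; right; right; left; rw [ck] at hx; exact ⟨rfl, hx.symm⟩
      right; right; right; right
      rw [cl l h1] at hx
      have hx : c l = p.1 := by linarith
      refine ⟨rfl, hl, hx, ?_⟩
      rw [← hx]
      rcases hc l hl with h | h | h
      · exact absurd h h1
      · exact Or.inl h
      · exact Or.inr h
  set y0 : ℝ := -M - 3/2 with hy0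
  set p0 : ℝ × ℝ := ((a i + a j)/2, y0) with hp0
  have sy0 : st (y0 + M + 2) = 1/2 := by rw [hy0, st_eq_half]; ring
  have Lp0 : LP S X' Y p0 = {(i, y0), (k, -y0), (j, y0)} := by
    ext q
    constructor
    · intro hq
      rcases Llow p0 (by simp only [hp0, hy0]; linarith) q hq with h | h | h | h | h
      · left; exact h.1
      · right; right; exact h.1
      · right; left; exact h.1
      · exfalso; rcases h.2.2.2 with h | h <;> simp only [hp0] at h <;> linarith
      · exfalso; rcases h.2.2.2 with h | h <;> simp only [hp0] at h <;> linarith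
    · rintro (rfl | rfl | rfl)
      · refine ⟨hi, ?_, ?_⟩
        · simp only [hp0]; rw [vleft i hi _ (by linarith), sy0, ai]; ring
        · exact (h.left i hi _ (by linarith)).2
      · refine ⟨hk, ?_, ?_⟩
        · simp only [hp0]; rw [vright k hk _ (by linarith), neg_neg, sy0, ck]; ring
        · simp only [hp0]; rw [(h.right k hk _ (by linarith)).2]; ring
      · refine ⟨hj, ?_, ?_⟩
        · simp only [hp0]; rw [vleft j hj _ (by linarith), sy0, aj]; ring
        · exact (h.left j hj _ (by linarith)).2
  have Lunique : ∀ p : ℝ × ℝ, p.2 < -M - 1 → p ≠ p0 → (LP S X' Y p).Subsingleton := by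
    intro p hp hne
    by_cases hs : st (p.2 + M + 2) = 1/2
    · have hy : p.2 = y0 := by rw [st_eq_half] at hs; rw [hy0]; linarith
      have hx : p.1 ≠ (a i + a j)/2 := fun hx => hne (by ext <;> simp [hp0, hx, hy])
      intro q hq q' hq'
      have c1 := Llow p hp q hq
      have c2 := Llow p hp q' hq'
      rw [hs] at c1 c2
      have k1 : (q.2 = p.2 ∧ q.1 ∈ S ∧ a q.1 = p.1) ∨ (q.2 = -p.2 ∧ q.1 ∈ S ∧ c q.1 = p.1) := by
        rcases c1 with h | h | h | h | h
        · exact absurd (by rw [h.2]; ring) hx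
        · exact absurd (by rw [h.2]; ring) hx
        · exact absurd (by rw [h.2]; ring) hx
        · left; tauto
        · right; tauto
      have k2 : (q'.2 = p.2 ∧ q'.1 ∈ S ∧ a q'.1 = p.1) ∨
          (q'.2 = -p.2 ∧ q'.1 ∈ S ∧ c q'.1 = p.1) := by
        rcases c2 with h | h | h | h | h
        · exact absurd (by rw [h.2]; ring) hx
        · exact absurd (by rw [h.2]; ring) hx
        · exact absurd (by rw [h.2]; ring) hx
        · left; tauto
        · right; tauto
      rcases k1 with ⟨u1, u2, u3⟩ | ⟨u1, u2, u3⟩ <;> rcases k2 with ⟨v1, v2, v3⟩ | ⟨v1, v2, v3⟩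
      · exact Prod.ext (hP.ia _ u2 _ v2 (u3.trans v3.symm)) (u1.trans v1.symm)
      · exact absurd (u3.trans v3.symm) (hP.ac _ u2 _ v2)
      · exact absurd (v3.trans u3.symm) (hP.ac _ v2 _ u2)
      · exact Prod.ext (hP.ic _ u2 _ v2 (u3.trans v3.symm)) (u1.trans v1.symm)
    · intro q hq q' hq'
      have c1 := Llow p hp q hq
      have c2 := Llow p hp q' hq'
      set σ := st (p.2 + M + 2) with hσ
      have s0 : 0 ≤ σ := st_nonneg _
      have s1 : σ ≤ 1 := st_le_one _
      have hτ : 1 - 2 * σ ≠ 0 := fun h => hs (by linarith)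
      have B1 : a i ≤ a j + (a i - a j) * (1 - σ) := by nlinarith
      have B1' : a j + (a i - a j) * (1 - σ) ≤ a j := by nlinarith
      have B2 : a i ≤ a i + (a j - a i) * (1 - σ) := by nlinarith
      have B2' : a i + (a j - a i) * (1 - σ) ≤ a j := by nlinarith
      have B3 : a i ≤ a i + a j - c k + (c k - (a i + a j - c k)) * (1 - σ) := by nlinarith
      have B3' : a i + a j - c k + (c k - (a i + a j - c k)) * (1 - σ) ≤ a j := by nlinarith
      have N12 : a j + (a i - a j) * (1 - σ) ≠ a i + (a j - a i) * (1 - σ) := by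
        intro he
        have : (a j - a i) * (1 - 2 * σ) = 0 := by linarith
        rcases mul_eq_zero.1 this with h | h
        · linarith
        · exact hτ h
      have N13 : a j + (a i - a j) * (1 - σ) ≠
          a i + a j - c k + (c k - (a i + a j - c k)) * (1 - σ) := by
        intro he
        have : (c k - a i) * (1 - 2 * σ) = 0 := by linarith
        rcases mul_eq_zero.1 this with h | h
        · linarith
        · exact hτ h
      have N23 : a i + (a j - a i) * (1 - σ) ≠
          a i + a j - c k + (c k - (a i + a j - c k)) * (1 - σ) := by
        intro he
        have : (a j - c k) * (1 - 2 * σ) = 0 := by linarith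
        rcases mul_eq_zero.1 this with h | h
        · linarith
        · exact hτ h
      rcases c1 with ⟨e1, u1⟩ | ⟨e1, u1⟩ | ⟨e1, u1⟩ | ⟨e1, u1, u2, u3⟩ | ⟨e1, u1, u2, u3⟩ <;>
      rcases c2 with ⟨e2, v1⟩ | ⟨e2, v1⟩ | ⟨e2, v1⟩ | ⟨e2, v1, v2, v3⟩ | ⟨e2, v1, v2, v3⟩
      · rw [e1, e2]
      · exact absurd (u1.symm.trans v1) N12
      · exact absurd (u1.symm.trans v1) N13
      · exfalso; rcases v3 with v3 | v3 <;> linarith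
      · exfalso; rcases v3 with v3 | v3 <;> linarith
      · exact absurd (v1.symm.trans u1) N12
      · rw [e1, e2]
      · exact absurd (u1.symm.trans v1) N23
      · exfalso; rcases v3 with v3 | v3 <;> linarith
      · exfalso; rcases v3 with v3 | v3 <;> linarith
      · exact absurd (v1.symm.trans u1) N13
      · exact absurd (v1.symm.trans u1) N23
      · rw [e1, e2]
      · exfalso; rcases v3 with v3 | v3 <;> linarith
      · exfalso; rcases v3 with v3 | v3 <;> linarith
      · exfalso; rcases u3 with v3 | v3 <;> linarith
      · exfalso; rcases u3 with v3 | v3 <;> linarith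
      · exfalso; rcases u3 with v3 | v3 <;> linarith
      · exact Prod.ext (hP.ia _ u1 _ v1 (u2.trans v2.symm)) (e1.trans e2.symm)
      · exact absurd (u2.trans v2.symm) (hP.ac _ u1 _ v1)
      · exfalso; rcases u3 with v3 | v3 <;> linarith
      · exfalso; rcases u3 with v3 | v3 <;> linarith
      · exfalso; rcases u3 with v3 | v3 <;> linarith
      · exact absurd (v2.trans u2.symm) (hP.ac _ v1 _ u1)
      · exact Prod.ext (hP.ic _ u1 _ v1 (u2.trans v2.symm)) (e1.trans e2.symm)
  have q12 : ((i, y0) : ι × ℝ) ≠ (k, -y0) := by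
    intro he; have : y0 = -y0 := congrArg Prod.snd he
    linarith
  have q23 : ((k, -y0) : ι × ℝ) ≠ (j, y0) := by
    intro he; have : -y0 = y0 := congrArg Prod.snd he
    linarith
  have q13 : ((i, y0) : ι × ℝ) ≠ (j, y0) := by
    intro he; exact hij (congrArg Prod.fst he)
  have hMult : Mult S X' Y = insert p0 (Mult S X Y) := by
    ext p
    rw [mem_insert_iff]
    rcases lt_or_ge p.2 (-M - 1) with hp | hp
    · constructor
      · intro hm
        by_contra hcon
        push Not at hcon
        exact hm (Lunique p hp hcon.1)
      · rintro (rfl | hm)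
        · intro hs
          rw [Lp0] at hs
          exact q12 (hs (by simp) (by simp))
        · exact absurd (h.mult_low hP' (by linarith)) hm
    · simp only [Mult, mem_ofPred_eq, Lup p hp]
      constructor
      · exact Or.inr
      · rintro (rfl | hm)
        · exfalso; simp only [hp0, hy0] at hp; linarith
        · exact hm
  have hp0n : p0 ∉ Mult S X Y := fun hm => hm (h.mult_low hP' (by simp only [hp0, hy0]; linarith))
  have hmY : ∀ p ∈ Mult S X Y, -M < p.2 := by
    intro p hp; by_contra hcon; push Not at hcon
    exact hp (h.mult_low hP' hcon)
  refine ⟨X', ⟨by linarith, ?_, h.sy, ?_, ?_, ?_, ?_, ?_, ?_, ?_⟩, ?_⟩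
  · intro l hl
    have := h.sx l hl
    simp only [hX']
    fun_prop
  · intro l hl t
    by_cases h1 : t < -M
    · right; rw [(h.derivY hl).1 h1]; norm_num
    by_cases h2 : M < t
    · right; rw [(h.derivY hl).2 h2]; norm_num
    rw [dmid l t (by linarith) (by linarith)]
    exact h.imm l hl t
  · intro l hl t ht
    refine ⟨?_, (h.left l hl t (by linarith)).2⟩
    rw [vleft l hl t (by linarith), st_zero (by linarith)]; ring
  · intro l hl t ht
    refine ⟨?_, (h.right l hl t (by linarith)).2⟩
    rw [vright l hl t (by linarith), st_zero (by linarith)]; ring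
  · intro l hl t h1 h2
    by_cases h3 : t ≤ -M
    · rw [(h.left l hl t h3).2]; linarith
    by_cases h4 : M ≤ t
    · rw [(h.right l hl t h4).2]; linarith
    have := h.mid l hl t (by linarith) (by linarith)
    linarith
  · intro l hl t
    by_cases h3 : t ≤ -M
    · rw [vleft l hl t h3]
      have := hP.ba l hl; have := hP'.ba l hl
      have := st_nonneg (t + M + 2); have := st_le_one (t + M + 2)
      constructor <;> nlinarith
    by_cases h4 : M ≤ t
    · rw [vright l hl t h4]
      have := hP.bc l hl; have := hP'.bc l hl
      have := st_nonneg (-t + M + 2); have := st_le_one (-t + M + 2)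
      constructor <;> nlinarith
    rw [vmid l t (by linarith) (by linarith)]
    exact h.bx l hl t
  · rw [hMult]; exact h.fin.insert _
  · intro p hp
    rw [hMult, mem_insert_iff] at hp
    rcases hp with rfl | hp
    · set d := deriv st (1/2) with hd
      have hdp : 0 < d := st_deriv_pos (by norm_num) (by norm_num)
      have hst : HasDerivAt st d (1/2) := (st_smooth.differentiable (by simp) _).hasDerivAt
      have dl : ∀ l ∈ S, deriv (X' l) y0 = (a' l - a l) * d := by
        intro l hl
        have ev : X' l =ᶠ[𝓝 y0] fun t => a' l + (a l - a' l) * (1 - st (t + M + 2)) := by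
          filter_upwards [eventually_lt_nhds (show y0 < -M by linarith)] with t ht
            using vleft l hl t ht.le
        rw [ev.deriv_eq]
        have i1 : HasDerivAt (fun t : ℝ => t + M + 2) 1 y0 :=
          ((hasDerivAt_id y0).add_const M).add_const 2
        have hst' : HasDerivAt st d (y0 + M + 2) := by
          rw [show y0 + M + 2 = 1/2 by rw [hy0]; ring]; exact hst
        have := (((hst'.comp y0 i1).const_sub 1).const_mul (a l - a' l)).const_add (a' l)
        refine this.deriv.trans ?_
        ring
      have dr : ∀ l ∈ S, deriv (X' l) (-y0) = (c l - c' l) * d := by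
        intro l hl
        have ev : X' l =ᶠ[𝓝 (-y0)] fun t => c' l + (c l - c' l) * (1 - st (-t + M + 2)) := by
          filter_upwards [eventually_gt_nhds (show M < -y0 by linarith)] with t ht
            using vright l hl t ht.le
        rw [ev.deriv_eq]
        have i1 : HasDerivAt (fun t : ℝ => -t + M + 2) (-1) (-y0) :=
          (((hasDerivAt_id (-y0)).neg).add_const M).add_const 2
        have hst' : HasDerivAt st d (-(-y0) + M + 2) := by
          rw [show -(-y0) + M + 2 = 1/2 by rw [hy0]; ring]; exact hst
        have := (((hst'.comp (-y0) i1).const_sub 1).const_mul (c l - c' l)).const_add (c' l)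
        refine this.deriv.trans ?_
        ring
      refine ⟨(i, y0), (k, -y0), (j, y0), Lp0, q12, q13, q23, ?_, a j - c k, a j - a i, c k - a i,
        by linarith, by linarith, by linarith, ?_, ?_⟩
      · simp only [dt]
        rw [dl i hi, dr k hk, (h.derivY hi).1 (by linarith), (h.derivY hk).2 (by linarith), ai, ck]
        have : 2 * (a i - c k) * d ≠ 0 := by
          apply mul_ne_zero _ hdp.ne'
          intro h0; linarith
        intro h0; apply this; linarith
      · simp only
        rw [dl i hi, dr k hk, dl j hj, ai, aj, ck]; ring
      · simp only
        rw [(h.derivY hi).1 (by linarith), (h.derivY hk).2 (by linarith),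
          (h.derivY hj).1 (by linarith)]; ring
    · have hY := hmY p hp
      refine (h.good p hp).congr (Lup p (by linarith)) ?_
      rintro ⟨l, t⟩ ⟨hl, hx, hy⟩
      simp only at hl hx hy
      refine ⟨dmid l t ?_ ?_, rfl⟩
      · by_contra hcon
        have := (h.left l hl t (by linarith)).2
        linarith
      · by_contra hcon
        have := (h.right l hl t (by linarith)).2
        linarith
  · rw [hMult, Set.ncard_insert_of_notMem hp0n h.fin]

end TD
end
end

section
open Set Metric Real
noncomputable section
namespace TD
open Filter Topology

/-- height profile of a cap -/
def hc (M t : ℝ) : ℝ := t * st (t - (M + 1)) - t * st (-t - (M + 1)) +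
  (M + 1) * (1 - st (t - (M + 1)) - st (-t - (M + 1)))

theorem hc_smooth (M : ℝ) : ContDiff ℝ (⊤ : ℕ∞) (hc M) := by
  have := st_smooth
  unfold hc
  fun_prop

theorem hc_neg (M t : ℝ) : hc M (-t) = hc M t := by
  unfold hc; rw [neg_neg]; ring

theorem hc_big {M t : ℝ} (hM : 0 < M) (ht : M + 2 ≤ t) : hc M t = t := by
  unfold hc; rw [st_one (by linarith), st_zero (by linarith)]; ring

theorem hc_bd {M t : ℝ} (hM : 0 < M) (ht : 0 ≤ t) : M < hc M t ∧ (t < M + 3 → hc M t < M + 3) := by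
  have e : hc M t = t * st (t - (M + 1)) + (M + 1) * (1 - st (t - (M + 1))) := by
    unfold hc; rw [st_zero (x := -t - (M+1)) (by linarith)]; ring
  have h0 := st_nonneg (t - (M + 1))
  have h1 := st_le_one (t - (M + 1))
  rw [e]
  rcases le_or_gt t (M + 1) with h | h
  · rw [st_zero (by linarith)]
    constructor
    · linarith
    · intro _; linarith
  · constructor
    · nlinarith
    · intro h3; nlinarith

theorem hc_gt {M : ℝ} (hM : 0 < M) (t : ℝ) : M < hc M t := by
  rcases le_total 0 t with h | h
  · exact (hc_bd hM h).1
  · rw [← hc_neg]; exact (hc_bd hM (by linarith)).1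

theorem hc_lt {M t : ℝ} (hM : 0 < M) (h1 : -(M + 3) < t) (h2 : t < M + 3) : hc M t < M + 3 := by
  rcases le_total 0 t with h | h
  · exact (hc_bd hM h).2 h2
  · rw [← hc_neg]; exact (hc_bd hM (by linarith)).2 (by linarith)

theorem cap_layer {ι : Type} [DecidableEq ι] {S : Finset ι} {a c : ι → ℝ} {L R M : ℝ}
    {X Y : ι → ℝ → ℝ} (hP : Pos S a c L R) {i : ι} (hi : i ∈ S)
    (ha : ∀ l ∈ S, l ≠ i → a l < min (a i) (c i) ∨ max (a i) (c i) < a l)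
    (hc' : ∀ l ∈ S, l ≠ i → c l < min (a i) (c i) ∨ max (a i) (c i) < c l)
    (h : LD (S.erase i) a c L R M X Y) :
    ∃ X' Y', LD S a c L R (M + 3) X' Y' ∧ Mult S X' Y' = Mult (S.erase i) X Y := by
  have hM := h.hM
  have hPe : Pos (S.erase i) a c L R :=
    ⟨fun l hl m hm => hP.ia l (Finset.mem_of_mem_erase hl) m (Finset.mem_of_mem_erase hm),
     fun l hl m hm => hP.ic l (Finset.mem_of_mem_erase hl) m (Finset.mem_of_mem_erase hm),
     fun l hl m hm => hP.ac l (Finset.mem_of_mem_erase hl) m (Finset.mem_of_mem_erase hm),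
     fun l hl => hP.ba l (Finset.mem_of_mem_erase hl),
     fun l hl => hP.bc l (Finset.mem_of_mem_erase hl)⟩
  have hac : a i ≠ c i := hP.ac i hi i hi
  set w := M + 3 with hw
  have hwp : 0 < w := by rw [hw]; linarith
  set Xc : ℝ → ℝ := fun t => a i + (c i - a i) * st ((t + w) / (2 * w)) with hXc
  set Yc : ℝ → ℝ := fun t => - hc M t with hYc
  have stcd := st_smooth
  have hcs := hc_smooth M
  have sXc : ContDiff ℝ (⊤ : ℕ∞) Xc := by rw [hXc]; fun_prop
  have sYc : ContDiff ℝ (⊤ : ℕ∞) Yc := by rw [hYc]; fun_prop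
  have Xl : ∀ t ≤ -w, Xc t = a i := by
    intro t ht; simp only [hXc]
    rw [st_zero (div_nonpos_of_nonpos_of_nonneg (by linarith) (by linarith))]; ring
  have Xr : ∀ t, w ≤ t → Xc t = c i := by
    intro t ht; simp only [hXc]
    rw [st_one (by rw [le_div_iff₀ (by linarith)]; linarith)]; ring
  have um : ∀ t, -w < t → t < w → 0 < (t + w)/(2*w) ∧ (t + w)/(2*w) < 1 := by
    intro t h1 h2
    exact ⟨div_pos (by linarith) (by linarith), by rw [div_lt_one (by linarith)]; linarith⟩
  have Xb : ∀ t, min (a i) (c i) ≤ Xc t ∧ Xc t ≤ max (a i) (c i) := by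
    intro t
    simp only [hXc]
    have h0 := st_nonneg ((t + w)/(2*w))
    have h1 := st_le_one ((t + w)/(2*w))
    rcases le_total (a i) (c i) with h | h
    · rw [min_eq_left h, max_eq_right h]; constructor <;> nlinarith
    · rw [min_eq_right h, max_eq_left h]; constructor <;> nlinarith
  have hYr : ∀ t, M + 2 ≤ t → Yc t = -t := by
    intro t ht; simp only [hYc]; rw [hc_big hM ht]
  have hYl : ∀ t, t ≤ -(M + 2) → Yc t = t := by
    intro t ht; simp only [hYc]; rw [← hc_neg, hc_big hM (by linarith)]; ring
  have inj : ∀ t s, Xc t = Xc s → Yc t = Yc s → t = s := by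
    intro t s hx hy
    have hst : st ((t + w)/(2*w)) = st ((s + w)/(2*w)) := by
      simp only [hXc] at hx
      have : (c i - a i) * st ((t + w)/(2*w)) = (c i - a i) * st ((s + w)/(2*w)) := by linarith
      exact mul_left_cancel₀ (sub_ne_zero.2 hac.symm) this
    have fin : (t + w)/(2*w) = (s + w)/(2*w) → t = s := by
      intro he
      field_simp at he
      linarith
    by_cases t1 : -w < t ∧ t < w
    · exact fin (st_inj (um t t1.1 t1.2).1 (um t t1.1 t1.2).2 hst)
    by_cases s1 : -w < s ∧ s < w
    · exact (fin (st_inj (um s s1.1 s1.2).1 (um s s1.1 s1.2).2 hst.symm).symm)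
    rcases le_or_gt t (-w) with t2 | t2 <;> rcases le_or_gt s (-w) with s2 | s2
    · rw [hYl t (by linarith), hYl s (by linarith)] at hy; exact hy
    · have s3 : w ≤ s := by by_contra hh; exact s1 ⟨s2, by linarith⟩
      rw [Xl t t2, Xr s s3] at hx; exact absurd hx hac
    · have t3 : w ≤ t := by by_contra hh; exact t1 ⟨t2, by linarith⟩
      rw [Xl s s2, Xr t t3] at hx; exact absurd hx.symm hac
    · have s3 : w ≤ s := by by_contra hh; exact s1 ⟨s2, by linarith⟩
      have t3 : w ≤ t := by by_contra hh; exact t1 ⟨t2, by linarith⟩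
      rw [hYr t (by linarith), hYr s (by linarith)] at hy; linarith
  set X' := Function.update X i Xc with hX'
  set Y' := Function.update Y i Yc with hY'
  have Xi : X' i = Xc := by simp [hX']
  have Yi : Y' i = Yc := by simp [hY']
  have Xo : ∀ l, l ≠ i → X' l = X l := by intro l hl; simp [hX', hl]
  have Yo : ∀ l, l ≠ i → Y' l = Y l := by intro l hl; simp [hY', hl]
  have Lup : ∀ p : ℝ × ℝ, -M ≤ p.2 → LP S X' Y' p = LP (S.erase i) X Y p := by
    intro p hp
    ext ⟨l, t⟩
    simp only [LP, mem_ofPred_eq, Finset.mem_erase]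
    by_cases hl : l = i
    · subst hl
      rw [Xi, Yi]
      simp only [ne_eq, not_true_eq_false, false_and, iff_false, not_and]
      intro _ _ hy
      have := hc_gt hM t
      simp only [hYc] at hy
      linarith
    · rw [Xo l hl, Yo l hl]; tauto
  have Llow : ∀ p : ℝ × ℝ, p.2 < -M → (LP S X' Y' p).Subsingleton := by
    intro p hp
    -- a strand different from the cap is outside the cap range
    have hout : ∀ l t, l ≠ i → (l, t) ∈ LP S X' Y' p →
        (p.1 < min (a i) (c i) ∨ max (a i) (c i) < p.1) ∧ (l, t) ∈ LP (S.erase i) X Y p := by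
      rintro l t hl ⟨h1, h2, h3⟩
      simp only at h1 h2 h3
      rw [Xo l hl] at h2; rw [Yo l hl] at h3
      have hle : l ∈ S.erase i := Finset.mem_erase.2 ⟨hl, h1⟩
      refine ⟨?_, hle, h2, h3⟩
      rw [← h2]
      rcases h.low hle (t := t) (by linarith) with ⟨_, e⟩ | ⟨_, e⟩
      · rw [e]; exact ha l h1 hl
      · rw [e]; exact hc' l h1 hl
    have hin : ∀ t, (i, t) ∈ LP S X' Y' p → (min (a i) (c i) ≤ p.1 ∧ p.1 ≤ max (a i) (c i)) := by
      rintro t ⟨h1, h2, h3⟩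
      simp only at h2
      rw [Xi] at h2
      rw [← h2]; exact Xb t
    rintro ⟨l, t⟩ hq ⟨m, s⟩ hq'
    by_cases hl : l = i <;> by_cases hm : m = i
    · subst hl; subst hm
      obtain ⟨_, h2, h3⟩ := hq
      obtain ⟨_, h2', h3'⟩ := hq'
      simp only [Xi, Yi] at h2 h3 h2' h3'
      rw [inj t s (h2.trans h2'.symm) (h3.trans h3'.symm)]
    · subst hl
      have := hin t hq
      rcases (hout m s hm hq').1 with h | h <;> linarith [this.1, this.2]
    · subst hm
      have := hin s hq'
      rcases (hout l t hl hq).1 with h | h <;> linarith [this.1, this.2]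
    · exact h.mult_low hPe hp.le (hout l t hl hq).2 (hout m s hm hq').2
  have hMult : Mult S X' Y' = Mult (S.erase i) X Y := by
    ext p
    rcases lt_or_ge p.2 (-M) with hp | hp
    · constructor
      · intro hm; exact absurd (Llow p hp) hm
      · intro hm; exact absurd (h.mult_low hPe hp.le) hm
    · simp only [Mult, mem_ofPred_eq, Lup p hp]
  have hmY : ∀ p ∈ Mult (S.erase i) X Y, -M < p.2 := by
    intro p hp; by_contra hcon; push Not at hcon
    exact hp (h.mult_low hPe hcon)
  refine ⟨X', Y', ⟨hwp, ?_, ?_, ?_, ?_, ?_, ?_, ?_, ?_, ?_⟩, hMult⟩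
  · intro l hl
    by_cases h1 : l = i
    · rw [h1, Xi]; exact sXc
    · rw [Xo l h1]; exact h.sx l (Finset.mem_erase.2 ⟨h1, hl⟩)
  · intro l hl
    by_cases h1 : l = i
    · rw [h1, Yi]; exact sYc
    · rw [Yo l h1]; exact h.sy l (Finset.mem_erase.2 ⟨h1, hl⟩)
  · intro l hl t
    by_cases h1 : l = i
    · rw [h1, Xi, Yi]
      by_cases t1 : t < -(M + 2)
      · right
        have : Yc =ᶠ[𝓝 t] fun x => x := by
          filter_upwards [eventually_lt_nhds t1] with x hx using hYl x hx.le
        rw [this.deriv_eq]; simp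
      by_cases t2 : M + 2 < t
      · right
        have : Yc =ᶠ[𝓝 t] fun x => -x := by
          filter_upwards [eventually_gt_nhds t2] with x hx using hYr x hx.le
        rw [this.deriv_eq]; simp
      left
      have hu := um t (by linarith) (by linarith)
      have i1 : HasDerivAt (fun x : ℝ => (x + w)/(2*w)) (1/(2*w)) t :=
        ((hasDerivAt_id t).add_const w).div_const (2*w)
      have hst : HasDerivAt st (deriv st ((t + w)/(2*w))) ((t + w)/(2*w)) :=
        (st_smooth.differentiable (by simp) _).hasDerivAt
      have := ((hst.comp t i1).const_mul (c i - a i)).const_add (a i)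
      have e : deriv Xc t = (c i - a i) * (deriv st ((t + w)/(2*w)) * (1/(2*w))) := this.deriv
      rw [e]
      have d1 := st_deriv_pos hu.1 hu.2
      refine mul_ne_zero (sub_ne_zero.2 hac.symm) (mul_ne_zero d1.ne' (by positivity))
    · rw [Xo l h1, Yo l h1]; exact h.imm l (Finset.mem_erase.2 ⟨h1, hl⟩) t
  · intro l hl t ht
    by_cases h1 : l = i
    · rw [h1, Xi, Yi]; exact ⟨Xl t ht, hYl t (by linarith)⟩
    · rw [Xo l h1, Yo l h1]; exact h.left l (Finset.mem_erase.2 ⟨h1, hl⟩) t (by linarith)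
  · intro l hl t ht
    by_cases h1 : l = i
    · rw [h1, Xi, Yi]; exact ⟨Xr t ht, hYr t (by linarith)⟩
    · rw [Xo l h1, Yo l h1]; exact h.right l (Finset.mem_erase.2 ⟨h1, hl⟩) t (by linarith)
  · intro l hl t h2 h3
    by_cases h1 : l = i
    · rw [h1, Yi]
      have := hc_lt hM h2 h3
      simp only [hYc]; linarith
    · have hle : l ∈ S.erase i := Finset.mem_erase.2 ⟨h1, hl⟩
      rw [Yo l h1]
      by_cases h3 : t ≤ -M
      · rw [(h.left l hle t h3).2]; linarith
      by_cases h4 : M ≤ t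
      · rw [(h.right l hle t h4).2]; linarith
      have := h.mid l hle t (by linarith) (by linarith)
      linarith
  · intro l hl t
    by_cases h1 : l = i
    · rw [h1, Xi]
      have b := Xb t
      have b1 := hP.ba i hi
      have b2 := hP.bc i hi
      exact ⟨(le_min b1.1 b2.1).trans b.1, b.2.trans (max_le b1.2 b2.2)⟩
    · rw [Xo l h1]; exact h.bx l (Finset.mem_erase.2 ⟨h1, hl⟩) t
  · rw [hMult]; exact h.fin
  · intro p hp
    rw [hMult] at hp
    have hY := hmY p hp
    refine (h.good p hp).congr (Lup p hY.le) ?_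
    rintro ⟨l, t⟩ ⟨hl, hx, hy⟩
    simp only at hl
    have h1 := (Finset.mem_erase.1 hl).1
    simp only [Xo l h1, Yo l h1, and_self]

end TD
end
end

section
open Set Metric Real
noncomputable section
namespace TD
open Filter Topology

/-- Alternation of in and out positions. -/
structure Alt {ι : Type} (S : Finset ι) (a c : ι → ℝ) : Prop where
  a1 : ∀ i ∈ S, ∀ j ∈ S, a i < a j → ∃ k ∈ S, a i < c k ∧ c k < a j
  a2 : ∀ i ∈ S, ∀ j ∈ S, c i < c j → ∃ k ∈ S, c i < a k ∧ a k < c j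
  a3 : ∀ i ∈ S, ∃ k ∈ S, a k < c i

def CC {ι : Type} (a c : ι → ℝ) (p q : ι) : Prop :=
  (a p < a q ∧ a q < c p ∧ c p < c q) ∨ (c q < c p ∧ c p < a q ∧ a q < a p)

open Classical in
def NN {ι : Type} (S : Finset ι) (a c : ι → ℝ) : ℕ :=
  ((S ×ˢ S).filter fun pq => CC a c pq.1 pq.2).card

theorem Pos.erase {ι : Type} [DecidableEq ι] {S : Finset ι} {a c : ι → ℝ} {L R : ℝ}
    (h : Pos S a c L R) (i : ι) : Pos (S.erase i) a c L R where
  ia := fun p hp q hq => h.ia p (Finset.mem_of_mem_erase hp) q (Finset.mem_of_mem_erase hq)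
  ic := fun p hp q hq => h.ic p (Finset.mem_of_mem_erase hp) q (Finset.mem_of_mem_erase hq)
  ac := fun p hp q hq => h.ac p (Finset.mem_of_mem_erase hp) q (Finset.mem_of_mem_erase hq)
  ba := fun p hp => h.ba p (Finset.mem_of_mem_erase hp)
  bc := fun p hp => h.bc p (Finset.mem_of_mem_erase hp)

/-- `i` joins adjacent positions -/
def Adjc {ι : Type} (S : Finset ι) (a c : ι → ℝ) (i : ι) : Prop :=
  ∀ l ∈ S, l ≠ i → (a l < min (a i) (c i) ∨ max (a i) (c i) < a l) ∧
    (c l < min (a i) (c i) ∨ max (a i) (c i) < c l)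

theorem Adjc.alt {ι : Type} [DecidableEq ι] {S : Finset ι} {a c : ι → ℝ} {L R : ℝ}
    (hP : Pos S a c L R) (h : Alt S a c) {i : ι} (hi : i ∈ S) (hA : Adjc S a c i) :
    Alt (S.erase i) a c := by
  have key : ∀ l ∈ S, l ≠ i → (a l < a i ∧ a l < c i ∨ a i < a l ∧ c i < a l) ∧
      (c l < a i ∧ c l < c i ∨ a i < c l ∧ c i < c l) := by
    intro l hl hne
    simpa only [lt_min_iff, max_lt_iff] using hA l hl hne
  refine ⟨?_, ?_, ?_⟩
  · intro p hp0 q hq0 hpq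
    obtain ⟨hpi, hp⟩ := Finset.mem_erase.1 hp0
    obtain ⟨hqi, hq⟩ := Finset.mem_erase.1 hq0
    obtain ⟨k, hk, h1, h2⟩ := h.a1 p hp q hq hpq
    by_cases hki : k = i
    · subst hki
      have kp := (key p hp hpi).1
      have kq := (key q hq hqi).1
      have e1 : a p < a k := by rcases kp with h | h <;> linarith
      have e2 : a k < a q := by rcases kq with h | h <;> linarith
      obtain ⟨k1, hk1, f1, f2⟩ := h.a1 p hp k hk e1
      obtain ⟨k2, hk2, f3, f4⟩ := h.a1 k hk q hq e2
      by_cases hkk : k1 = k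
      · refine ⟨k2, Finset.mem_erase.2 ⟨?_, hk2⟩, by linarith, by linarith⟩
        rintro rfl
        rw [hkk] at f2; linarith
      · exact ⟨k1, Finset.mem_erase.2 ⟨hkk, hk1⟩, by linarith, by linarith⟩
    · exact ⟨k, Finset.mem_erase.2 ⟨hki, hk⟩, h1, h2⟩
  · intro p hp0 q hq0 hpq
    obtain ⟨hpi, hp⟩ := Finset.mem_erase.1 hp0
    obtain ⟨hqi, hq⟩ := Finset.mem_erase.1 hq0
    obtain ⟨k, hk, h1, h2⟩ := h.a2 p hp q hq hpq
    by_cases hki : k = i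
    · subst hki
      have kp := (key p hp hpi).2
      have kq := (key q hq hqi).2
      have e1 : c p < c k := by rcases kp with h | h <;> linarith
      have e2 : c k < c q := by rcases kq with h | h <;> linarith
      obtain ⟨k1, hk1, f1, f2⟩ := h.a2 p hp k hk e1
      obtain ⟨k2, hk2, f3, f4⟩ := h.a2 k hk q hq e2
      by_cases hkk : k1 = k
      · refine ⟨k2, Finset.mem_erase.2 ⟨?_, hk2⟩, by linarith, by linarith⟩
        rintro rfl
        rw [hkk] at f2; linarith
      · exact ⟨k1, Finset.mem_erase.2 ⟨hkk, hk1⟩, by linarith, by linarith⟩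
    · exact ⟨k, Finset.mem_erase.2 ⟨hki, hk⟩, h1, h2⟩
  · intro p hp0
    obtain ⟨hpi, hp⟩ := Finset.mem_erase.1 hp0
    obtain ⟨k, hk, h1⟩ := h.a3 p hp
    by_cases hki : k = i
    · subst hki
      have kp := (key p hp hpi).2
      have e1 : c k < c p := by rcases kp with h | h <;> linarith
      obtain ⟨k1, hk1, f1, f2⟩ := h.a2 k hk p hp e1
      by_cases hkk : k1 = k
      · obtain ⟨k2, hk2, f3⟩ := h.a3 k hk
        refine ⟨k2, Finset.mem_erase.2 ⟨?_, hk2⟩, by linarith⟩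
        rintro rfl
        rw [hkk] at f1; linarith
      · exact ⟨k1, Finset.mem_erase.2 ⟨hkk, hk1⟩, by linarith⟩
    · exact ⟨k, Finset.mem_erase.2 ⟨hki, hk⟩, h1⟩

theorem Adjc.nn {ι : Type} [DecidableEq ι] {S : Finset ι} {a c : ι → ℝ}
    {i : ι} (hA : Adjc S a c i) :
    NN (S.erase i) a c = NN S a c := by
  have key : ∀ l ∈ S, l ≠ i → (a l < a i ∧ a l < c i ∨ a i < a l ∧ c i < a l) ∧
      (c l < a i ∧ c l < c i ∨ a i < c l ∧ c i < c l) := by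
    intro l hl hne
    simpa only [lt_min_iff, max_lt_iff] using hA l hl hne
  unfold NN
  congr 1
  ext ⟨p, q⟩
  simp only [Finset.mem_filter, Finset.mem_product, Finset.mem_erase]
  constructor
  · rintro ⟨⟨⟨_, hp⟩, _, hq⟩, h⟩; exact ⟨⟨hp, hq⟩, h⟩
  · rintro ⟨⟨hp, hq⟩, h⟩
    refine ⟨⟨⟨?_, hp⟩, ?_, hq⟩, h⟩
    · rintro rfl
      by_cases hqp : q = p
      · subst hqp; rcases h with h | h <;> linarith
      · have := (key q hq hqp).1
        rcases h with h | h <;> rcases this with g | g <;> linarith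
    · rintro rfl
      by_cases hqp : p = q
      · subst hqp; rcases h with h | h <;> linarith
      · have := (key p hp hqp).2
        rcases h with h | h <;> rcases this with g | g <;> linarith

theorem find_swap {ι : Type} {S : Finset ι} {a c : ι → ℝ} {L R : ℝ}
    (hP : Pos S a c L R) (h : Alt S a c) (hS : S.Nonempty) (hA : ∀ i ∈ S, ¬ Adjc S a c i) :
    ∃ i ∈ S, ∃ j ∈ S, ∃ k ∈ S, a i < c k ∧ c k < a j ∧
      (∀ l ∈ S, l = i ∨ l = j ∨ a l < a i ∨ a j < a l) ∧
      (∀ l ∈ S, l = k ∨ c l < a i ∨ a j < c l) ∧ a j < c i ∧ c j < a i := by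
  obtain ⟨m, hm, hmax⟩ := S.exists_max_image a hS
  -- adjacency from emptiness
  have adj : ∀ i ∈ S, (∀ l ∈ S, ¬ (a i < a l ∧ a l < c i) ∧ ¬ (c i < a l ∧ a l < a i)) →
      Adjc S a c i := by
    intro i hi hh l hl hne
    simp only [lt_min_iff, max_lt_iff]
    have n1 : a l ≠ a i := fun e => hne (hP.ia l hl i hi e)
    have n2 : c l ≠ c i := fun e => hne (hP.ic l hl i hi e)
    have n3 := hP.ac l hl i hi
    have n4 := hP.ac i hi l hl
    have n5 := hP.ac i hi i hi
    constructor
    · have := hh l hl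
      grind
    · rcases lt_or_gt_of_ne n2 with g | g
      · left
        refine ⟨?_, g⟩
        by_contra hcon
        obtain ⟨k, hk, g1, g2⟩ := h.a2 l hl i hi g
        exact (hh k hk).1 ⟨by linarith, g2⟩
      · right
        refine ⟨?_, g⟩
        by_contra hcon
        obtain ⟨k, hk, g1, g2⟩ := h.a2 i hi l hl g
        exact (hh k hk).2 ⟨g1, by linarith⟩
  have hmd : c m < a m := by
    by_contra hcon
    refine hA m hm (adj m hm fun l hl => ⟨?_, ?_⟩)
    · rintro ⟨g1, g2⟩; linarith [hmax l hl]
    · rintro ⟨g1, g2⟩; linarith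
  obtain ⟨j, hj', hjmin⟩ := (S.filter fun i => c i < a i).exists_min_image a
    ⟨m, Finset.mem_filter.2 ⟨hm, hmd⟩⟩
  obtain ⟨hj, hjd⟩ := Finset.mem_filter.1 hj'
  obtain ⟨k0, hk0, hk0j⟩ := h.a3 j hj
  obtain ⟨i, hi', himax⟩ := (S.filter fun i => a i < a j).exists_max_image a
    ⟨k0, Finset.mem_filter.2 ⟨hk0, by linarith⟩⟩
  obtain ⟨hi, hij⟩ := Finset.mem_filter.1 hi'
  have hii : a i < c i := by
    rcases lt_or_gt_of_ne (hP.ac i hi i hi) with g | g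
    · exact g
    · linarith [hjmin i (Finset.mem_filter.2 ⟨hi, g⟩)]
  have ha : ∀ l ∈ S, l = i ∨ l = j ∨ a l < a i ∨ a j < a l := by
    intro l hl
    by_cases hli : l = i
    · exact Or.inl hli
    by_cases hlj : l = j
    · exact Or.inr (Or.inl hlj)
    right; right
    have n1 : a l ≠ a i := fun e => hli (hP.ia l hl i hi e)
    have n2 : a l ≠ a j := fun e => hlj (hP.ia l hl j hj e)
    rcases lt_or_gt_of_ne n2 with g | g
    · exact Or.inl (lt_of_le_of_ne (himax l (Finset.mem_filter.2 ⟨hl, g⟩)) n1)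
    · exact Or.inr g
  have ha2 : ∀ l ∈ S, ¬ (a i < a l ∧ a l < a j) := by
    rintro l hl ⟨g1, g2⟩
    linarith [himax l (Finset.mem_filter.2 ⟨hl, g2⟩)]
  obtain ⟨k, hk, hik, hkj⟩ := h.a1 i hi j hj hij
  have hc : ∀ l ∈ S, l = k ∨ c l < a i ∨ a j < c l := by
    intro l hl
    by_cases hlk : l = k
    · exact Or.inl hlk
    right
    by_contra hcon
    push Not at hcon
    have n : c l ≠ c k := fun e => hlk (hP.ic l hl k hk e)
    rcases lt_or_gt_of_ne n with g | g
    · obtain ⟨k2, hk2, g1, g2⟩ := h.a2 l hl k hk g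
      exact ha2 k2 hk2 ⟨by linarith, by linarith⟩
    · obtain ⟨k2, hk2, g1, g2⟩ := h.a2 k hk l hl g
      exact ha2 k2 hk2 ⟨by linarith, by linarith⟩
  refine ⟨i, hi, j, hj, k, hk, hik, hkj, ha, hc, ?_, ?_⟩
  · by_contra hcon
    refine hA i hi (adj i hi fun l hl => ⟨?_, ?_⟩)
    · rintro ⟨g1, g2⟩; exact ha2 l hl ⟨g1, by linarith⟩
    · rintro ⟨g1, g2⟩; linarith
  · by_contra hcon
    refine hA j hj (adj j hj fun l hl => ⟨?_, ?_⟩)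
    · rintro ⟨g1, g2⟩; linarith
    · rintro ⟨g1, g2⟩
      refine ha2 l hl ⟨by linarith, g2⟩

theorem exists_LD {ι : Type} [DecidableEq ι] (L R : ℝ) : ∀ (N : ℕ) (S : Finset ι) (a c : ι → ℝ),
    S.card + NN S a c = N → Pos S a c L R → Alt S a c →
    ∃ M X Y, LD S a c L R M X Y ∧ (Mult S X Y).ncard = NN S a c := by
  intro N
  induction N using Nat.strong_induction_on with
  | _ N ih =>
  intro S a c hN hP hAlt
  rcases S.eq_empty_or_nonempty with rfl | hS
  · have hm : ∀ X Y : ι → ℝ → ℝ, Mult (∅ : Finset ι) X Y = ∅ := by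
      intro X Y
      ext p
      simp [Mult, LP]
    refine ⟨1, fun _ _ => 0, fun _ _ => 0, ?_, by simp [hm, NN]⟩
    constructor <;> simp [hm]
  by_cases hA : ∃ i ∈ S, Adjc S a c i
  · obtain ⟨i, hi, hA⟩ := hA
    have hnn := hA.nn
    obtain ⟨M, X, Y, h, hcard⟩ := ih ((S.erase i).card + NN (S.erase i) a c) (by
      rw [hnn]
      have := Finset.card_erase_lt_of_mem hi
      omega) (S.erase i) a c rfl (hP.erase i) (hA.alt hP hAlt hi)
    obtain ⟨X', Y', h', e⟩ := cap_layer hP hi (fun l hl hne => (hA l hl hne).1)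
      (fun l hl hne => (hA l hl hne).2) h
    exact ⟨M + 3, X', Y', h', by rw [e, hcard, hnn]⟩
  push Not at hA
  obtain ⟨i, hi, j, hj, k, hk, hik, hkj, ha, hc, hic, hjc⟩ := find_swap hP hAlt hS hA
  have hij : i ≠ j := by rintro rfl; linarith
  have hki : k ≠ i := by rintro rfl; linarith
  have hkj' : k ≠ j := by rintro rfl; linarith
  set a' := a ∘ Equiv.swap i j with ha'
  set c' := Function.update c k (a i + a j - c k) with hc'
  have ai : a' i = a j := by simp [ha']
  have aj : a' j = a i := by simp [ha']
  have al : ∀ l, l ≠ i → l ≠ j → a' l = a l := by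
    intro l h1 h2
    simp [ha', Equiv.swap_apply_of_ne_of_ne h1 h2]
  have ck : c' k = a i + a j - c k := by simp [hc']
  have cl : ∀ l, l ≠ k → c' l = c l := by
    intro l h1; simp [hc', h1]
  have swS : ∀ l ∈ S, Equiv.swap i j l ∈ S := by
    intro l hl
    rcases Equiv.swap_apply_eq_iff (x := i) (y := j) (z := l) (w := Equiv.swap i j l) |>.1 rfl with h
    by_cases h1 : l = i
    · subst h1; simpa using hj
    by_cases h2 : l = j
    · subst h2; simpa using hi
    rwa [Equiv.swap_apply_of_ne_of_ne h1 h2]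
  have F1 : ∀ l ∈ S, ∀ p ∈ S, (a l < c' p ↔ a l < c p) ∧ (c' p < a l ↔ c p < a l) := by
    intro l hl p hp
    by_cases hpk : p = k
    · subst hpk
      rw [ck]
      rcases ha l hl with rfl | rfl | g | g <;>
        exact ⟨⟨fun _ => by linarith, fun _ => by linarith⟩,
          ⟨fun _ => by linarith, fun _ => by linarith⟩⟩
    · rw [cl p hpk]; simp
  have F2 : ∀ p ∈ S, ∀ q ∈ S, (c' p < c' q ↔ c p < c q) := by
    intro p hp q hq
    by_cases hpk : p = k
    · by_cases hqk : q = k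
      · subst hpk; subst hqk; simp
      · subst hpk
        rw [ck, cl q hqk]
        rcases hc q hq with g | g | g
        · exact absurd g hqk
        all_goals exact ⟨fun _ => by linarith, fun _ => by linarith⟩
    · by_cases hqk : q = k
      · subst hqk
        rw [ck, cl p hpk]
        rcases hc p hp with g | g | g
        · exact absurd g hpk
        all_goals exact ⟨fun _ => by linarith, fun _ => by linarith⟩
      · rw [cl p hpk, cl q hqk]
  have hP' : Pos S a' c' L R := by
    refine ⟨?_, ?_, ?_, ?_, ?_⟩
    · intro p hp q hq e
      exact (Equiv.swap i j).injective (hP.ia _ (swS p hp) _ (swS q hq) e)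
    · intro p hp q hq e
      by_contra hne
      have n : c p ≠ c q := fun e => hne (hP.ic p hp q hq e)
      rcases lt_or_gt_of_ne n with g | g
      · linarith [(F2 p hp q hq).2 g]
      · linarith [(F2 q hq p hp).2 g]
    · intro p hp q hq e
      have e : a (Equiv.swap i j p) = c' q := e
      rcases lt_or_gt_of_ne (hP.ac _ (swS p hp) q hq) with g | g
      · linarith [((F1 _ (swS p hp) q hq).1).2 g]
      · linarith [((F1 _ (swS p hp) q hq).2).2 g]
    · intro p hp; exact hP.ba _ (swS p hp)
    · intro p hp
      by_cases hpk : p = k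
      · subst hpk; rw [ck]
        have := hP.ba i hi
        have := hP.ba j hj
        constructor <;> linarith
      · rw [cl p hpk]; exact hP.bc p hp
  have hAlt' : Alt S a' c' := by
    refine ⟨?_, ?_, ?_⟩
    · intro p hp q hq e
      obtain ⟨l, hl, g1, g2⟩ := hAlt.a1 _ (swS p hp) _ (swS q hq) e
      exact ⟨l, hl, (F1 _ (swS p hp) l hl).1.2 g1, (F1 _ (swS q hq) l hl).2.2 g2⟩
    · intro p hp q hq e
      obtain ⟨l, hl, g1, g2⟩ := hAlt.a2 p hp q hq ((F2 p hp q hq).1 e)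
      refine ⟨Equiv.swap i j l, swS l hl, ?_, ?_⟩
      · simp only [ha', Function.comp, Equiv.swap_apply_self]
        exact (F1 l hl p hp).2.2 g1
      · simp only [ha', Function.comp, Equiv.swap_apply_self]
        exact (F1 l hl q hq).1.2 g2
    · intro p hp
      obtain ⟨l, hl, g1⟩ := hAlt.a3 p hp
      refine ⟨Equiv.swap i j l, swS l hl, ?_⟩
      simp only [ha', Function.comp, Equiv.swap_apply_self]
      exact (F1 l hl p hp).1.2 g1
  -- the counted pairs
  have hcl : ∀ p ∈ S, p ≠ k → (c p < a i ∨ a j < c p) := by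
    intro p hp hpk
    rcases hc p hp with g | g | g
    · exact absurd g hpk
    · exact Or.inl g
    · exact Or.inr g
  have hal : ∀ p ∈ S, p ≠ i → p ≠ j → (a p < a i ∨ a j < a p) := by
    intro p hp h1 h2
    rcases ha p hp with g | g | g | g
    · exact absurd g h1
    · exact absurd g h2
    · exact Or.inl g
    · exact Or.inr g
  have N1 : ¬ CC a' c' k i := by
    rintro (⟨g1, g2, g3⟩ | ⟨g1, g2, g3⟩)
    · rw [ai, ck] at g2; linarith
    · rw [cl i hki.symm, ck] at g1; linarith
  have N2 : ¬ CC a' c' k j := by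
    rintro (⟨g1, g2, g3⟩ | ⟨g1, g2, g3⟩)
    · rw [cl j hkj'.symm, ck] at g3; linarith
    · rw [aj, ck] at g2; linarith
  have N3 : ∀ p ∈ S, ∀ q ∈ S, ¬ (p = k ∧ q = i) → ¬ (p = k ∧ q = j) →
      (CC a' c' p q ↔ CC a c p q) := by
    intro p hp q hq h1 h2
    have G1 : (a' q < c' p ↔ a q < c p) ∧ (c' p < a' q ↔ c p < a q) := by
      by_cases hqi : q = i
      · subst hqi
        have hpk : p ≠ k := fun e => h1 ⟨e, rfl⟩
        rw [ai, cl p hpk]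
        rcases hcl p hp hpk with g | g <;>
        exact ⟨⟨fun _ => by linarith, fun _ => by linarith⟩,
          ⟨fun _ => by linarith, fun _ => by linarith⟩⟩
      by_cases hqj : q = j
      · subst hqj
        have hpk : p ≠ k := fun e => h2 ⟨e, rfl⟩
        rw [aj, cl p hpk]
        rcases hcl p hp hpk with g | g <;>
        exact ⟨⟨fun _ => by linarith, fun _ => by linarith⟩,
          ⟨fun _ => by linarith, fun _ => by linarith⟩⟩
      rw [al q hqi hqj]
      exact F1 q hq p hp
    by_cases hex : (p = i ∧ q = j) ∨ (p = j ∧ q = i)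
    · have ci := cl i hki.symm
      have cj := cl j hkj'.symm
      rcases hex with ⟨rfl, rfl⟩ | ⟨rfl, rfl⟩
      · unfold CC
        rw [ai, aj, ci, cj]
        constructor <;> rintro (⟨g1, g2, g3⟩ | ⟨g1, g2, g3⟩) <;> linarith
      · unfold CC
        rw [ai, aj, ci, cj]
        constructor <;> rintro (⟨g1, g2, g3⟩ | ⟨g1, g2, g3⟩) <;> linarith
    · have G2 : (a' p < a' q ↔ a p < a q) ∧ (a' q < a' p ↔ a q < a p) := by
        by_cases hpq : p = q
        · subst hpq; simp
        have T : ∀ l, l = i ∨ l = j ∨ (l ≠ i ∧ l ≠ j) := by intro l; tauto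
        rcases T p with rfl | rfl | ⟨p1, p2⟩ <;> rcases T q with rfl | rfl | ⟨q1, q2⟩
        · exact absurd rfl hpq
        · exact absurd (Or.inl ⟨rfl, rfl⟩) hex
        · rw [ai, al q q1 q2]
          rcases hal q hq q1 q2 with g | g <;>
          exact ⟨⟨fun _ => by linarith, fun _ => by linarith⟩,
            ⟨fun _ => by linarith, fun _ => by linarith⟩⟩
        · exact absurd (Or.inr ⟨rfl, rfl⟩) hex
        · exact absurd rfl hpq
        · rw [aj, al q q1 q2]
          rcases hal q hq q1 q2 with g | g <;>
          exact ⟨⟨fun _ => by linarith, fun _ => by linarith⟩,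
            ⟨fun _ => by linarith, fun _ => by linarith⟩⟩
        · rw [ai, al p p1 p2]
          rcases hal p hp p1 p2 with g | g <;>
          exact ⟨⟨fun _ => by linarith, fun _ => by linarith⟩,
            ⟨fun _ => by linarith, fun _ => by linarith⟩⟩
        · rw [aj, al p p1 p2]
          rcases hal p hp p1 p2 with g | g <;>
          exact ⟨⟨fun _ => by linarith, fun _ => by linarith⟩,
            ⟨fun _ => by linarith, fun _ => by linarith⟩⟩
        · rw [al p p1 p2, al q q1 q2]; simp
      unfold CC
      rw [G1.1, G1.2, G2.1, G2.2, F2 p hp q hq, F2 q hq p hp]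
  have N4 : ∃ s ∈ S, (∀ q ∈ S, CC a c k q ↔ (CC a' c' k q ∨ q = s)) ∧ ¬ CC a' c' k s := by
    rcases hal k hk hki hkj' with g | g
    · refine ⟨i, hi, ?_, N1⟩
      intro q hq
      by_cases hqi : q = i
      · subst hqi
        simp only [or_true, iff_true]
        exact Or.inl ⟨g, hik, by linarith⟩
      by_cases hqj : q = j
      · subst hqj
        simp only [N2, hqi, or_false, iff_false]
        rintro (⟨g1, g2, g3⟩ | ⟨g1, g2, g3⟩) <;> linarith
      rw [N3 k hk q hq (by tauto) (by tauto)]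
      simp [hqi]
    · refine ⟨j, hj, ?_, N2⟩
      intro q hq
      by_cases hqj : q = j
      · subst hqj
        simp only [or_true, iff_true]
        exact Or.inr ⟨by linarith, hkj, g⟩
      by_cases hqi : q = i
      · subst hqi
        simp only [N1, hqj, or_false, iff_false]
        rintro (⟨g1, g2, g3⟩ | ⟨g1, g2, g3⟩) <;> linarith
      rw [N3 k hk q hq (by tauto) (by tauto)]
      simp [hqj]
  obtain ⟨s, hs, hs1, hs2⟩ := N4
  have hNN : NN S a c = NN S a' c' + 1 := by
    classical
    unfold NN
    rw [← Finset.card_insert_of_notMem (a := (k, s))]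
    · congr 1
      ext ⟨p, q⟩
      simp only [Finset.mem_filter, Finset.mem_product, Finset.mem_insert, Prod.mk.injEq]
      by_cases hpk : p = k
      · subst hpk
        constructor
        · rintro ⟨⟨g1, g2⟩, g3⟩
          rcases (hs1 q g2).1 g3 with g | g
          · exact Or.inr ⟨⟨g1, g2⟩, g⟩
          · exact Or.inl ⟨rfl, g⟩
        · rintro (⟨-, rfl⟩ | ⟨⟨g1, g2⟩, g3⟩)
          · exact ⟨⟨hk, hs⟩, (hs1 q hs).2 (Or.inr rfl)⟩
          · exact ⟨⟨g1, g2⟩, (hs1 q g2).2 (Or.inl g3)⟩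
      · constructor
        · rintro ⟨⟨g1, g2⟩, g3⟩
          exact Or.inr ⟨⟨g1, g2⟩, (N3 p g1 q g2 (by tauto) (by tauto)).2 g3⟩
        · rintro (⟨g, -⟩ | ⟨⟨g1, g2⟩, g3⟩)
          · exact absurd g hpk
          · exact ⟨⟨g1, g2⟩, (N3 p g1 q g2 (by tauto) (by tauto)).1 g3⟩
    · simp only [Finset.mem_filter]
      exact fun g => hs2 g.2
  obtain ⟨M, X, Y, h, hcard⟩ := ih (S.card + NN S a' c') (by omega) S a' c' rfl hP' hAlt'
  obtain ⟨X', h', e⟩ := swap_layer hP hi hj hk hik hkj ha hc hP' h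
  exact ⟨M + 2, X', Y, h', by rw [e, hcard, hNN]⟩

end TD
end
end

section
open Set Metric Real
noncomputable section
namespace TD
open Filter Topology
open scoped RealInnerProductSpace

/-- The strip model of the disk. -/
def EE (n : ℕ) (m : ℝ) (p : ℝ × ℝ) : Plane :=
  WithLp.toLp 2 ![exp (-(π / n) * (p.2 + m)) * cos (p.1 * π / n),
    exp (-(π / n) * (p.2 + m)) * sin (p.1 * π / n)]

theorem EE_zero (n : ℕ) (m : ℝ) (p : ℝ × ℝ) :
    EE n m p 0 = exp (-(π / n) * (p.2 + m)) * cos (p.1 * π / n) := rfl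

theorem EE_one (n : ℕ) (m : ℝ) (p : ℝ × ℝ) :
    EE n m p 1 = exp (-(π / n) * (p.2 + m)) * sin (p.1 * π / n) := rfl

theorem EE_norm (n : ℕ) (m : ℝ) (p : ℝ × ℝ) : ‖EE n m p‖ = exp (-(π / n) * (p.2 + m)) := by
  have h : ‖EE n m p‖ ^ 2 = exp (-(π / n) * (p.2 + m)) ^ 2 := by
    rw [norm_sq_plane, EE_zero, EE_one]
    linear_combination exp (-(π / n) * (p.2 + m)) ^ 2 * sin_sq_add_cos_sq (p.1 * π / n)
  exact (sq_eq_sq₀ (norm_nonneg _) (exp_pos _).le).1 h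

theorem EE_inj {n : ℕ} (hn : 1 ≤ n) {m : ℝ} {p q : ℝ × ℝ} (hp : 0 ≤ p.1 ∧ p.1 ≤ 2 * n - 1)
    (hq : 0 ≤ q.1 ∧ q.1 ≤ 2 * n - 1) (h : EE n m p = EE n m q) : p = q := by
  have hn' : (0:ℝ) < n := by exact_mod_cast hn
  have hpi := Real.pi_pos
  have e := congrArg norm h
  rw [EE_norm, EE_norm] at e
  have e2 : p.2 = q.2 := by
    have := exp_injective e
    have h3 : -(π / n) ≠ 0 := by
      have : 0 < π / n := by positivity
      linarith
    have := mul_left_cancel₀ h3 this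
    linarith
  have c0 : EE n m p 0 = EE n m q 0 := by rw [h]
  have c1 : EE n m p 1 = EE n m q 1 := by rw [h]
  rw [EE_zero, EE_zero, e] at c0
  rw [EE_one, EE_one, e] at c1
  have c0 := mul_left_cancel₀ (exp_pos _).ne' c0
  have c1 := mul_left_cancel₀ (exp_pos _).ne' c1
  have rng : ∀ x : ℝ, 0 ≤ x ∧ x ≤ 2 * n - 1 → x * π / n ∈ Ico 0 (2 * π) := by
    rintro x ⟨h0, h1⟩
    refine ⟨by positivity, ?_⟩
    rw [div_lt_iff₀ hn']
    nlinarith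
  have e1 : p.1 = q.1 := by
    by_contra hne
    refine cos_sin_ne (rng _ hq) (rng _ hp) ?_ (by rw [c0, c1]; ring)
    intro hh
    apply hne
    field_simp at hh
    linarith
  exact Prod.ext e1 e2

theorem det2_li {u v : Plane} (h : det2 u v ≠ 0) : LinearIndependent ℝ ![u, v] := by
  rw [LinearIndependent.pair_iff]
  intro s t hst
  have h0 : s * u 0 + t * v 0 = 0 := by
    have := congrArg (fun w : Plane => w 0) hst; simpa using this
  have h1 : s * u 1 + t * v 1 = 0 := by
    have := congrArg (fun w : Plane => w 1) hst; simpa using this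
  unfold det2 at h
  constructor
  · have : s * (u 0 * v 1 - u 1 * v 0) = 0 := by linear_combination v 1 * h0 - v 0 * h1
    exact (mul_eq_zero.1 this).resolve_right h
  · have : t * (u 0 * v 1 - u 1 * v 0) = 0 := by linear_combination u 0 * h1 - u 1 * h0
    exact (mul_eq_zero.1 this).resolve_right h

/-- the arc in the disk -/
def darc (n : ℕ) (m : ℝ) (f g : ℝ → ℝ) (τ : ℝ) : Plane :=
  EE n m (f ((2 * τ - 1) * m), g ((2 * τ - 1) * m))

theorem darc_smooth {n : ℕ} {m : ℝ} {f g : ℝ → ℝ} (hf : ContDiff ℝ (⊤ : ℕ∞) f)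
    (hg : ContDiff ℝ (⊤ : ℕ∞) g) : ContDiff ℝ (⊤ : ℕ∞) (darc n m f g) := by
  rw [contDiff_euclidean]
  have hl : ContDiff ℝ (⊤ : ℕ∞) (fun τ : ℝ => (2 * τ - 1) * m) := by fun_prop
  have hf' := hf.comp hl
  have hg' := hg.comp hl
  simp only [Function.comp_def] at hf' hg'
  intro k
  fin_cases k
  · show ContDiff ℝ (⊤ : ℕ∞) fun τ : ℝ => exp (-(π / n) * (g ((2 * τ - 1) * m) + m)) *
      cos (f ((2 * τ - 1) * m) * π / n)
    exact (contDiff_const.mul (hg'.add contDiff_const)).exp.mul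
      ((hf'.mul contDiff_const).div_const _).cos
  · show ContDiff ℝ (⊤ : ℕ∞) fun τ : ℝ => exp (-(π / n) * (g ((2 * τ - 1) * m) + m)) *
      sin (f ((2 * τ - 1) * m) * π / n)
    exact (contDiff_const.mul (hg'.add contDiff_const)).exp.mul
      ((hf'.mul contDiff_const).div_const _).sin

/-- conformal factor -/
def KK (n : ℕ) (m y : ℝ) : ℝ := 2 * m * (π / n) * exp (-(π / n) * (y + m))

theorem darc_deriv {n : ℕ} {m : ℝ} {f g : ℝ → ℝ} (hf : ContDiff ℝ (⊤ : ℕ∞) f)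
    (hg : ContDiff ℝ (⊤ : ℕ∞) g) (τ t : ℝ) (ht : (2 * τ - 1) * m = t) :
    deriv (darc n m f g) τ 0 = KK n m (g t) *
      (- sin (f t * π / n) * deriv f t - cos (f t * π / n) * deriv g t) ∧
    deriv (darc n m f g) τ 1 = KK n m (g t) *
      (cos (f t * π / n) * deriv f t - sin (f t * π / n) * deriv g t) := by
  have hl : HasDerivAt (fun τ : ℝ => (2 * τ - 1) * m) (2 * m) τ := by
    have := (((hasDerivAt_id τ).const_mul 2).sub_const 1).mul_const m
    simpa using this
  have hf1 : HasDerivAt f (deriv f t) ((2 * τ - 1) * m) := by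
    rw [ht]; exact (hf.differentiable (by simp) t).hasDerivAt
  have hg1 : HasDerivAt g (deriv g t) ((2 * τ - 1) * m) := by
    rw [ht]; exact (hg.differentiable (by simp) t).hasDerivAt
  have hf2 := ((hf1.comp τ hl).mul_const π).div_const (n : ℝ)
  have hg2 := ((hg1.comp τ hl).add_const m).const_mul (-(π / n))
  have hs := darc_smooth (n := n) (m := m) hf hg
  rw [← deriv_coord hs, ← deriv_coord hs]
  constructor
  · have := (hg2.exp.mul hf2.cos).deriv
    simp only [Function.comp_def] at this
    refine Eq.trans this ?_
    rw [ht]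
    unfold KK
    ring
  · have := (hg2.exp.mul hf2.sin).deriv
    simp only [Function.comp_def] at this
    refine Eq.trans this ?_
    rw [ht]
    unfold KK
    ring

theorem exists_diagram {n : ℕ} (hn : 1 ≤ n) (a c : Fin n → ℕ) (ha : ∀ i, a i ≤ 2 * n - 1)
    (hc : ∀ i, c i ≤ 2 * n - 1) {M : ℝ} {X Y : Fin n → ℝ → ℝ}
    (hP : Pos Finset.univ (fun i => (a i : ℝ)) (fun i => (c i : ℝ)) 0 (2 * n - 1))
    (h : LD Finset.univ (fun i => (a i : ℝ)) (fun i => (c i : ℝ)) 0 (2 * n - 1) M X Y) :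
    ∃ D : TripleDiagram n 0, (∀ i, D.arc i 0 = bpoint n (a i) ∧ D.arc i 1 = bpoint n (c i)) ∧
      D.tripleCount = (Mult Finset.univ X Y).ncard := by
  have hn' : (0:ℝ) < n := by exact_mod_cast hn
  have hpi := Real.pi_pos
  have hpn : 0 < π / n := by positivity
  have hM := h.hM
  obtain ⟨m, hm⟩ : ∃ m, m = M + 1 := ⟨_, rfl⟩
  have hm0 : 0 < m := by linarith
  have U : ∀ i : Fin n, i ∈ Finset.univ := Finset.mem_univ
  have sx := fun i => h.sx i (U i)
  have sy := fun i => h.sy i (U i)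
  have Ygt : ∀ i t, -m < t → t < m → -m < Y i t := by
    intro i t h1 h2
    rcases le_or_gt t (-M) with g | g
    · rw [(h.left i (U i) t g).2]; exact h1
    rcases le_or_gt M t with g' | g'
    · rw [(h.right i (U i) t g').2]; linarith
    · linarith [h.mid i (U i) t g g']
  have Yle : ∀ i t, -m < Y i t → -m < t ∧ t < m := by
    intro i t hY
    constructor
    · by_contra hcon
      rw [(h.left i (U i) t (by linarith)).2] at hY; linarith
    · by_contra hcon
      rw [(h.right i (U i) t (by linarith)).2] at hY; linarith
  have KKp : ∀ y, 0 < KK n m y := by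
    intro y; unfold KK; have := exp_pos (-(π / n) * (y + m)); positivity
  have L0 : ∀ i, X i (-m) = a i ∧ Y i (-m) = -m := fun i => h.left i (U i) _ (by linarith)
  have R0 : ∀ i, X i m = c i ∧ Y i m = -m := fun i => h.right i (U i) _ (by linarith)
  have s0 : ∀ i, darc n m (X i) (Y i) 0 = bpoint n (a i) := by
    intro i
    have e : (2 * (0:ℝ) - 1) * m = -m := by ring
    unfold darc EE bpoint unitPt
    rw [e, (L0 i).1, (L0 i).2]
    simp
  have s1 : ∀ i, darc n m (X i) (Y i) 1 = bpoint n (c i) := by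
    intro i
    have e : (2 * (1:ℝ) - 1) * m = m := by ring
    unfold darc EE bpoint unitPt
    rw [e, (R0 i).1, (R0 i).2]
    simp
  have bp0 : ∀ k : ℕ, bpoint n k 0 = cos (k * π / n) := fun k => rfl
  have bp1 : ∀ k : ℕ, bpoint n k 1 = sin (k * π / n) := fun k => rfl
  have bpn : ∀ k : ℕ, ‖bpoint n k‖ = 1 := by
    intro k
    have : ‖bpoint n k‖ ^ 2 = 1 := by
      rw [norm_sq_plane, bp0, bp1]; exact cos_sq_add_sin_sq _
    nlinarith [norm_nonneg (bpoint n k)]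
  have bpinj : ∀ k l : ℕ, k ≤ 2 * n - 1 → l ≤ 2 * n - 1 → bpoint n k = bpoint n l → k = l := by
    intro k l hk hl e
    by_contra hne
    refine cos_sin_ne (ang_mem (n := n) (k := l) (by omega)) (ang_mem (n := n) (k := k) (by omega))
      (ang_ne hn hne) ?_
    rw [← bp0, ← bp0, ← bp1, ← bp1, e]; ring
  have dn : ∀ i τ, ‖darc n m (X i) (Y i) τ‖ =
      exp (-(π / n) * (Y i ((2 * τ - 1) * m) + m)) := fun i τ => EE_norm _ _ _
  have interior : ∀ i, ∀ τ ∈ Ioo (0:ℝ) 1, ‖darc n m (X i) (Y i) τ‖ < 1 := by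
    rintro i τ ⟨h0, h1⟩
    rw [dn, exp_lt_one_iff]
    have := Ygt i ((2 * τ - 1) * m) (by nlinarith) (by nlinarith)
    have : 0 < π / n * (Y i ((2 * τ - 1) * m) + m) := by
      apply mul_pos hpn; linarith
    linarith
  let D0 : PreDiagram n 0 :=
  { arc := fun i => darc n m (X i) (Y i)
    loop := fun i => i.elim0
    arc_smooth := fun i => darc_smooth (sx i) (sy i)
    loop_smooth := fun i => i.elim0
    loop_periodic := fun i => i.elim0
    arc_immersed := by
      intro i τ _ h0
      obtain ⟨d0, d1⟩ := darc_deriv (n := n) (sx i) (sy i) τ _ rfl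
      rw [h0] at d0 d1
      set t := (2 * τ - 1) * m
      set θ := X i t * π / n
      have hK := (KKp (Y i t)).ne'
      have e0 : - sin θ * deriv (X i) t - cos θ * deriv (Y i) t = 0 :=
        (mul_eq_zero.1 (d0.symm.trans rfl)).resolve_left hK
      have e1 : cos θ * deriv (X i) t - sin θ * deriv (Y i) t = 0 :=
        (mul_eq_zero.1 (d1.symm.trans rfl)).resolve_left hK
      have sc := sin_sq_add_cos_sq θ
      rcases h.imm i (U i) t with g | g
      · apply g; linear_combination (- sin θ) * e0 + cos θ * e1 - deriv (X i) t * sc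
      · apply g; linear_combination (- cos θ) * e0 - sin θ * e1 - deriv (Y i) t * sc
    loop_immersed := fun i => i.elim0
    arc_in_disk := by
      rintro i τ ⟨h0, h1⟩
      rcases h0.eq_or_lt with rfl | h0
      · rw [s0, bpn]
      rcases h1.eq_or_lt with rfl | h1
      · rw [s1, bpn]
      exact (interior i τ ⟨h0, h1⟩).le
    arc_interior := interior
    arc_start_bdry := fun i => by rw [s0, bpn]
    arc_end_bdry := fun i => by rw [s1, bpn]
    arc_transverse_start := by
      intro i
      obtain ⟨d0, d1⟩ := darc_deriv (n := n) (m := m) (sx i) (sy i) 0 (-m) (by ring)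
      rw [(h.derivY (U i)).1 (by linarith), (L0 i).1] at d0 d1
      rw [s0, PiLp.inner_apply, Fin.sum_univ_two, d0, d1, bp0, bp1]
      simp only [RCLike.inner_apply, conj_trivial]
      have sc := sin_sq_add_cos_sq ((a i : ℝ) * π / n)
      have hK := KKp (Y i (-m))
      intro e
      have : KK n m (Y i (-m)) = 0 := by linear_combination - e - KK n m (Y i (-m)) * sc
      linarith
    arc_transverse_end := by
      intro i
      obtain ⟨d0, d1⟩ := darc_deriv (n := n) (m := m) (sx i) (sy i) 1 m (by ring)
      rw [(h.derivY (U i)).2 (by linarith), (R0 i).1] at d0 d1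
      rw [s1, PiLp.inner_apply, Fin.sum_univ_two, d0, d1, bp0, bp1]
      simp only [RCLike.inner_apply, conj_trivial]
      have sc := sin_sq_add_cos_sq ((c i : ℝ) * π / n)
      have hK := KKp (Y i m)
      intro e
      have : KK n m (Y i m) = 0 := by linear_combination e - KK n m (Y i m) * sc
      linarith
    loop_in_disk := fun i => i.elim0
    endpoints_distinct := by
      rintro (i | i) (j | j) e
      · simp only [Sum.elim_inl, s0] at e
        have := bpinj _ _ (ha i) (ha j) e
        rw [hP.ia i (U i) j (U j) (by simp [this])]
      · simp only [Sum.elim_inl, Sum.elim_inr, s0, s1] at e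
        have := bpinj _ _ (ha i) (hc j) e
        exact absurd (by simp [this]) (hP.ac i (U i) j (U j))
      · simp only [Sum.elim_inl, Sum.elim_inr, s0, s1] at e
        have := bpinj _ _ (hc i) (ha j) e
        exact absurd (by simp [this]) (hP.ac j (U j) i (U i))
      · simp only [Sum.elim_inr, s1] at e
        have := bpinj _ _ (hc i) (hc j) e
        rw [hP.ic i (U i) j (U j) (by simp [this])] }
  let Φ : Fin n × ℝ → (Fin n × ℝ) ⊕ (Fin 0 × ℝ) := fun q => Sum.inl (q.1, (q.2 / m + 1) / 2)
  have Φinj : Function.Injective Φ := by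
    rintro ⟨i, t⟩ ⟨j, s⟩ e
    simp only [Φ, Sum.inl.injEq, Prod.mk.injEq] at e
    obtain ⟨e1, e2⟩ := e
    have : t / m = s / m := by linarith
    rw [div_left_inj' hm0.ne'] at this
    rw [e1, this]
  have tback : ∀ t : ℝ, (2 * ((t / m + 1) / 2) - 1) * m = t := by
    intro t; field_simp; ring
  have pass : ∀ p : ℝ × ℝ, -m < p.2 → (0 ≤ p.1 ∧ p.1 ≤ 2 * (n:ℝ) - 1) →
      D0.passages (EE n m p) = Φ '' LP Finset.univ X Y p := by
    intro p hp2 hp1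
    ext q
    constructor
    · intro hq
      rcases q with ⟨i, τ⟩ | ⟨i, τ⟩
      · obtain ⟨hτ, hq⟩ : τ ∈ Ioo (0:ℝ) 1 ∧ darc n m (X i) (Y i) τ = EE n m p := hq
        have := EE_inj hn (p := (X i ((2 * τ - 1) * m), Y i ((2 * τ - 1) * m)))
          (h.bx i (U i) _) hp1 hq
        refine ⟨(i, (2 * τ - 1) * m), ⟨U i, ?_, ?_⟩, ?_⟩
        · rw [← this]
        · rw [← this]
        · simp only [Φ]
          congr 2
          field_simp
          ring
      · exact i.elim0
    · rintro ⟨⟨i, t⟩, ⟨-, hx, hy⟩, rfl⟩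
      simp only at hx hy
      obtain ⟨t1, t2⟩ := Yle i t (by rw [hy]; exact hp2)
      refine (show (t / m + 1) / 2 ∈ Ioo (0:ℝ) 1 ∧
        darc n m (X i) (Y i) ((t / m + 1) / 2) = EE n m p from ⟨⟨?_, ?_⟩, ?_⟩)
      · have : -1 < t / m := by rw [lt_div_iff₀ hm0]; linarith
        linarith
      · have : t / m < 1 := by rw [div_lt_iff₀ hm0]; linarith
        linarith
      · unfold darc
        rw [tback, hx, hy]
  have Mrange : ∀ p ∈ Mult Finset.univ X Y, -m < p.2 ∧ (0 ≤ p.1 ∧ p.1 ≤ 2 * (n:ℝ) - 1) := by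
    intro p hp
    constructor
    · by_contra hcon
      exact hp (h.mult_low hP (by linarith))
    · have hne : (LP Finset.univ X Y p).Nonempty := by
        by_contra hcon
        rw [Set.not_nonempty_iff_eq_empty] at hcon
        apply hp; rw [hcon]; exact Set.subsingleton_empty
      obtain ⟨q, hq, hx, hy⟩ := hne
      rw [← hx]; exact h.bx q.1 hq q.2
  have mset : {P : Plane | D0.IsMultiplePoint P} = EE n m '' Mult Finset.univ X Y := by
    ext P
    constructor
    · intro hP'
      have hP' : ¬ (D0.passages P).Subsingleton := hP'
      have hne : (D0.passages P).Nonempty := by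
        by_contra hcon
        rw [Set.not_nonempty_iff_eq_empty] at hcon
        apply hP'; rw [hcon]; exact Set.subsingleton_empty
      obtain ⟨⟨i, τ⟩ | ⟨i, τ⟩, hq⟩ := hne
      · obtain ⟨hτ, hq⟩ : τ ∈ Ioo (0:ℝ) 1 ∧ darc n m (X i) (Y i) τ = P := hq
        set t := (2 * τ - 1) * m with ht
        have hPe : EE n m (X i t, Y i t) = P := hq
        refine ⟨(X i t, Y i t), ?_, hPe⟩
        intro hs
        apply hP'
        rw [← hPe, pass _ (Ygt i t (by nlinarith [hτ.1]) (by nlinarith [hτ.2])) (h.bx i (U i) t)]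
        exact hs.image Φ
      · exact i.elim0
    · rintro ⟨p, hp, rfl⟩
      show ¬ (D0.passages _).Subsingleton
      obtain ⟨r1, r2⟩ := Mrange p hp
      rw [pass p r1 r2]
      intro hs
      exact hp (Set.subsingleton_of_image Φinj _ hs)
  -- tangents
  have tan : ∀ p : ℝ × ℝ, ∀ q ∈ LP Finset.univ X Y p,
      D0.tangent (Φ q) 0 = KK n m p.2 * (- sin (p.1 * π / n) * deriv (X q.1) q.2 -
        cos (p.1 * π / n) * deriv (Y q.1) q.2) ∧
      D0.tangent (Φ q) 1 = KK n m p.2 * (cos (p.1 * π / n) * deriv (X q.1) q.2 -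
        sin (p.1 * π / n) * deriv (Y q.1) q.2) := by
    rintro p ⟨i, t⟩ ⟨-, hx, hy⟩
    simp only at hx hy
    have := darc_deriv (n := n) (m := m) (sx i) (sy i) ((t / m + 1) / 2) t (tback t)
    rw [hx, hy] at this
    exact this
  have tdet : ∀ p : ℝ × ℝ, ∀ q ∈ LP Finset.univ X Y p, ∀ q' ∈ LP Finset.univ X Y p,
      det2 (D0.tangent (Φ q)) (D0.tangent (Φ q')) = KK n m p.2 ^ 2 * dt X Y q q' := by
    intro p q hq q' hq'
    obtain ⟨e0, e1⟩ := tan p q hq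
    obtain ⟨f0, f1⟩ := tan p q' hq'
    unfold det2 dt
    rw [e0, e1, f0, f1]
    linear_combination KK n m p.2 ^ 2 * (deriv (X q.1) q.2 * deriv (Y q'.1) q'.2 -
      deriv (Y q.1) q.2 * deriv (X q'.1) q'.2) * sin_sq_add_cos_sq (p.1 * π / n)
  have mp : ∀ P, D0.IsMultiplePoint P → ∃ p ∈ Mult Finset.univ X Y, EE n m p = P ∧
      D0.passages P = Φ '' LP Finset.univ X Y p := by
    intro P hP'
    have : P ∈ EE n m '' Mult Finset.univ X Y := by rw [← mset]; exact hP'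
    obtain ⟨p, hp, rfl⟩ := this
    exact ⟨p, hp, rfl, pass p (Mrange p hp).1 (Mrange p hp).2⟩
  let D : TripleDiagram n 0 :=
  { D0 with
    multiple_finite := by
      show {P : Plane | D0.IsMultiplePoint P}.Finite
      rw [mset]; exact h.fin.image _
    triple := by
      intro P hP'
      show (D0.passages P).ncard = 3
      obtain ⟨p, hp, rfl, hpass⟩ := mp P hP'
      rw [hpass, Set.ncard_image_of_injective _ Φinj]
      obtain ⟨q1, q2, q3, e, h12, h13, h23, -⟩ := h.good p hp
      rw [e]
      exact Set.ncard_eq_three.2 ⟨q1, q2, q3, h12, h13, h23, rfl⟩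
    branches_transverse := by
      intro P hP' r1 hr1 r2 hr2 hne
      have hr1 : r1 ∈ D0.passages P := hr1
      have hr2 : r2 ∈ D0.passages P := hr2
      show LinearIndependent ℝ ![D0.tangent r1, D0.tangent r2]
      obtain ⟨p, hp, rfl, hpass⟩ := mp P hP'
      rw [hpass] at hr1 hr2
      obtain ⟨u, hu, rfl⟩ := hr1
      obtain ⟨v, hv, rfl⟩ := hr2
      have huv : u ≠ v := fun e => hne (by rw [e])
      apply det2_li
      rw [tdet p u hu v hv]
      refine mul_ne_zero (pow_ne_zero _ (KKp _).ne') ?_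
      obtain ⟨q1, q2, q3, e, h12, h13, h23, hdt, α, β, γ, hα, hβ, hγ, e1, e2⟩ := h.good p hp
      have hs : ∀ q q' : Fin n × ℝ, dt X Y q' q = - dt X Y q q' := by
        intro q q'; unfold dt; ring
      have d13 : dt X Y q1 q3 ≠ 0 := by
        intro h0
        apply hdt
        have : β * dt X Y q1 q2 = 0 := by
          unfold dt at h0 ⊢
          linear_combination deriv (X q1.1) q1.2 * e2 - deriv (Y q1.1) q1.2 * e1 - γ * h0
        exact (mul_eq_zero.1 this).resolve_left hβ.ne'
      have d23 : dt X Y q2 q3 ≠ 0 := by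
        intro h0
        apply hdt
        have : α * dt X Y q1 q2 = 0 := by
          unfold dt at h0 ⊢
          linear_combination deriv (Y q2.1) q2.2 * e1 - deriv (X q2.1) q2.2 * e2 + γ * h0
        exact (mul_eq_zero.1 this).resolve_left hα.ne'
      rw [e] at hu hv
      simp only [Set.mem_insert_iff, Set.mem_singleton_iff] at hu hv
      rcases hu with rfl | rfl | rfl <;> rcases hv with rfl | rfl | rfl
      · exact absurd rfl huv
      · exact hdt
      · exact d13
      · rw [hs]; exact neg_ne_zero.2 hdt
      · exact absurd rfl huv
      · exact d23
      · rw [hs]; exact neg_ne_zero.2 d13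
      · rw [hs]; exact neg_ne_zero.2 d23
      · exact absurd rfl huv
    alternating := by
      intro P hP'
      obtain ⟨p, hp, rfl, hpass⟩ := mp P hP'
      obtain ⟨q1, q2, q3, e, h12, h13, h23, hdt, α, β, γ, hα, hβ, hγ, e1, e2⟩ := h.good p hp
      refine ⟨Φ q1, Φ q2, Φ q3, ?_, α, β, γ, hα, hβ, hγ, ?_⟩
      · show D0.passages _ = _
        rw [hpass, e, Set.image_insert_eq, Set.image_insert_eq, Set.image_singleton]
      · show α • D0.tangent (Φ q1) + β • D0.tangent (Φ q2) + γ • D0.tangent (Φ q3) = 0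
        obtain ⟨x1, y1⟩ := tan p q1 (by rw [e]; simp)
        obtain ⟨x2, y2⟩ := tan p q2 (by rw [e]; simp)
        obtain ⟨x3, y3⟩ := tan p q3 (by rw [e]; simp)
        ext k
        fin_cases k
        · show α * D0.tangent (Φ q1) 0 + β * D0.tangent (Φ q2) 0 + γ * D0.tangent (Φ q3) 0 = 0
          rw [x1, x2, x3]
          linear_combination KK n m p.2 * (- sin (p.1 * π / n) * e1 - cos (p.1 * π / n) * e2)
        · show α * D0.tangent (Φ q1) 1 + β * D0.tangent (Φ q2) 1 + γ * D0.tangent (Φ q3) 1 = 0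
          rw [y1, y2, y3]
          linear_combination KK n m p.2 * (cos (p.1 * π / n) * e1 - sin (p.1 * π / n) * e2) }
  refine ⟨D, fun i => ⟨s0 i, s1 i⟩, ?_⟩
  show {P : Plane | D0.IsMultiplePoint P}.ncard = _
  rw [mset]
  exact Set.ncard_image_of_injOn fun p hp q hq e =>
    EE_inj hn (Mrange p hp).2 (Mrange q hq).2 e

theorem exists_min {n : ℕ} (hn : 1 ≤ n) (σ : Equiv.Perm (Fin n)) :
    ∃ D : TripleDiagram n 0, Realizes D σ ∧ D.tripleCount = Ncross n σ := by
  let a : Fin n → ℕ := fun i => 2 * (i : ℕ)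
  let c : Fin n → ℕ := fun i => 2 * (σ i : ℕ) + 1
  have hP : Pos Finset.univ (fun i => (a i : ℝ)) (fun i => (c i : ℝ)) 0 (2 * n - 1) := by
    have cast : ((2 * n - 1 : ℕ) : ℝ) = 2 * (n:ℝ) - 1 := by
      rw [Nat.cast_sub (by omega)]; push_cast; ring
    rw [← cast]
    refine ⟨?_, ?_, ?_, ?_, ?_⟩
    · intro i _ j _ e
      have e : a i = a j := by exact_mod_cast e
      simp only [a] at e
      exact Fin.ext (by omega)
    · intro i _ j _ e
      have e : c i = c j := by exact_mod_cast e
      simp only [c] at e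
      exact σ.injective (Fin.ext (by omega))
    · intro i _ j _ e
      have e : a i = c j := by exact_mod_cast e
      simp only [a, c] at e
      omega
    · intro i _
      refine ⟨Nat.cast_nonneg _, Nat.cast_le.2 ?_⟩
      simp only [a]; omega
    · intro i _
      refine ⟨Nat.cast_nonneg _, Nat.cast_le.2 ?_⟩
      simp only [c]; omega
  have hA : Alt Finset.univ (fun i => (a i : ℝ)) (fun i => (c i : ℝ)) := by
    refine ⟨?_, ?_, ?_⟩
    · intro i _ j _ e
      have e : a i < a j := by exact_mod_cast e
      refine ⟨σ.symm i, Finset.mem_univ _, Nat.cast_lt.2 ?_, Nat.cast_lt.2 ?_⟩ <;>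
        simp only [a, c, Equiv.apply_symm_apply] at e ⊢ <;> omega
    · intro i _ j _ e
      have e : c i < c j := by exact_mod_cast e
      refine ⟨σ j, Finset.mem_univ _, Nat.cast_lt.2 ?_, Nat.cast_lt.2 ?_⟩ <;>
        simp only [a, c] at e ⊢ <;> omega
    · intro i _
      refine ⟨σ i, Finset.mem_univ _, Nat.cast_lt.2 ?_⟩
      simp only [a, c]; omega
  obtain ⟨M, X, Y, h, hcard⟩ := exists_LD 0 (2 * (n:ℝ) - 1) _ _ _ _ rfl hP hA
  obtain ⟨D, hD, hDc⟩ := exists_diagram hn a c (fun i => by simp only [a]; omega)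
    (fun i => by simp only [c]; omega) hP h
  refine ⟨D, hD, ?_⟩
  rw [hDc, hcard]
  unfold NN Ncross
  classical
  congr 1
  ext ⟨i, j⟩
  simp only [Finset.mem_filter, Finset.mem_product, Finset.mem_univ, true_and, CC, Nat.cast_lt, a, c]
  constructor
  · intro g
    refine ⟨?_, g⟩
    rintro rfl
    omega
  · exact fun g => g.2

end TD
end
end

/-- **Theorem (lower bound).** Every triple diagram whose arcs realize `σ` (loops
permitted) has at least `N(σ)` triple points; consequently the minimum number of triple
points over all triple diagrams whose arcs realize `σ` equals `N(σ)`. -/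
theorem triple_diagram_Ncross_lower_bound (n : ℕ) (hn : 1 ≤ n) (σ : Equiv.Perm (Fin n)) :
    (∀ (nl : ℕ) (D : TripleDiagram n nl), Realizes D σ → Ncross n σ ≤ D.tripleCount) ∧
    IsLeast {k : ℕ | ∃ (nl : ℕ) (D : TripleDiagram n nl), Realizes D σ ∧ D.tripleCount = k}
      (Ncross n σ) := by
  obtain ⟨D, hD, hc⟩ := TD.exists_min hn σ
  refine ⟨fun nl D h => TD.lower_bound hn σ D h, ⟨0, D, hD, hc⟩, ?_⟩
  rintro k ⟨nl, D, h, rfl⟩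
  exact TD.lower_bound hn σ D h
end

section
/- The count N(σ) is independent of the choice of linear ordering of the boundary points compatible with their cyclic ordering. Precisely: for n ≥ 1, a bijection σ : Fin n → Fin n, and any m ∈ {0,…,2n−1}, define the linear order <_m on {0,…,2n−1} by x <_m y iff ((x − m) mod 2n) < ((y − m) mod 2n), and let N_m(σ) be the number of ordered pairs (i, j) with i ≠ j such that, writing a = 2i, b = 2j, c = 2σ(i)+1, d = 2σ(j)+1, either a <_m b <_m c <_m d or d <_m c <_m b <_m a. Then N_m(σ) = N_0(σ) for every m. -/
/-- `N_m(σ)`: the number of ordered pairs `(i,j)`, `i ≠ j`, such that, writing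
`a = 2i`, `b = 2j`, `c = 2σ(i)+1`, `d = 2σ(j)+1` in `{0,…,2n−1}`, either
`a <_m b <_m c <_m d` or `d <_m c <_m b <_m a`, where `x <_m y` iff
`(x − m) mod 2n < (y − m) mod 2n`. -/
def Nm (n : ℕ) (σ : Equiv.Perm (Fin n)) (m : ℕ) : ℕ :=
  (Finset.univ.filter fun ij : Fin n × Fin n =>
    ij.1 ≠ ij.2 ∧
      (let f : ℕ → ℤ := fun x => ((x : ℤ) - (m : ℤ)) % (2 * (n : ℤ))
       let a := f (2 * (ij.1 : ℕ))
       let b := f (2 * (ij.2 : ℕ))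
       let c := f (2 * (σ ij.1 : ℕ) + 1)
       let d := f (2 * (σ ij.2 : ℕ) + 1)
       (a < b ∧ b < c ∧ c < d) ∨ (d < c ∧ c < b ∧ b < a))).card

open Finset

/-- The crossing condition. -/
def crossP (a b c d : ℤ) : Prop := (a < b ∧ b < c ∧ c < d) ∨ (d < c ∧ c < b ∧ b < a)

instance (a b c d : ℤ) : Decidable (crossP a b c d) := by unfold crossP; infer_instance

/-- The count for arbitrary position functions. -/
def cnt {n : ℕ} (A C : Fin n → ℤ) : ℤ :=
  ∑ i, ∑ j, if crossP (A i) (A j) (C i) (C j) then 1 else 0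

/-- Moving the first point to the end. -/
def rot (N y : ℤ) : ℤ := if y = 0 then N - 1 else y - 1

lemma cnt_swap {n : ℕ} (A C : Fin n → ℤ) : cnt A C = cnt C A := by
  unfold cnt
  rw [Finset.sum_comm]
  refine Finset.sum_congr rfl fun i _ => Finset.sum_congr rfl fun j _ => ?_
  refine if_congr ?_ rfl rfl
  unfold crossP
  omega

lemma surj_aux {n : ℕ} (A : Fin n → ℤ) (s : ℤ) (h0 : ∀ j, 0 ≤ A j) (h1 : ∀ j, A j < 2 * n)
    (hp : ∀ j, A j % 2 = s) (hA : Function.Injective A) (x : ℤ) (hx0 : 0 ≤ x)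
    (hx1 : x < 2 * n) (hx : x % 2 = s) : ∃ j, A j = x := by
  let u : Fin n → Fin n := fun j => ⟨(A j / 2).toNat, by have := h0 j; have := h1 j; omega⟩
  have hu : Function.Injective u := by
    intro i j hij
    apply hA
    have h : (A i / 2).toNat = (A j / 2).toNat := congrArg Fin.val hij
    have := h0 i; have := h0 j; have := hp i; have := hp j
    omega
  obtain ⟨j, hj⟩ := Finite.surjective_of_injective hu ⟨(x / 2).toNat, by omega⟩
  refine ⟨j, ?_⟩
  have h : (A j / 2).toNat = (x / 2).toNat := congrArg Fin.val hj
  have := h0 j; have := hp j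
  omega

lemma cnt_rot {n : ℕ} (A C : Fin n → ℤ) (hn : 1 ≤ n)
    (hA0 : ∀ j, 0 ≤ A j) (hA1 : ∀ j, A j < 2 * n)
    (hC0 : ∀ j, 0 ≤ C j) (hC1 : ∀ j, C j < 2 * n)
    (hAp : ∀ j, A j % 2 = 0) (hCp : ∀ j, C j % 2 = 1)
    (hA : Function.Injective A) (hC : Function.Injective C) :
    cnt (fun i => rot (2 * n) (A i)) (fun i => rot (2 * n) (C i)) = cnt A C := by
  obtain ⟨k, hk⟩ := surj_aux A 0 hA0 hA1 hAp hA 0 le_rfl (by omega) rfl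
  unfold cnt
  refine Finset.sum_congr rfl fun i _ => ?_
  by_cases hik : i = k
  · subst hik
    have hcard : (univ.filter fun j => 0 < A j ∧ A j < C i).card
        = (univ.filter fun j => C j < C i).card := by
      rw [← Finset.card_image_of_injective (f := fun j => A j - 1) _
          (fun x y h => hA (by simpa using h)),
        ← Finset.card_image_of_injective (f := C) (univ.filter fun j => C j < C i) hC]
      congr 1
      ext x
      simp only [mem_image, mem_filter, mem_univ, true_and]
      constructor
      · rintro ⟨j, ⟨h1, h2⟩, rfl⟩
        have := hAp j; have := hA1 j
        obtain ⟨l, hl⟩ := surj_aux C 1 hC0 hC1 hCp hC (A j - 1) (by omega) (by omega) (by omega)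
        exact ⟨l, by omega, hl⟩
      · rintro ⟨j, h2, rfl⟩
        have := hCp j; have := hC0 j; have := hC1 i; have := hCp i
        obtain ⟨l, hl⟩ := surj_aux A 0 hA0 hA1 hAp hA (C j + 1) (by omega) (by omega) (by omega)
        exact ⟨l, by omega, by omega⟩
    have hs : (∑ j, if 0 < A j ∧ A j < C i then (1 : ℤ) else 0)
        = ∑ j, if C j < C i then (1 : ℤ) else 0 := by
      simp only [Finset.sum_boole]; rw [hcard]
    rw [← sub_eq_zero, ← Finset.sum_sub_distrib]
    rw [← sub_eq_zero, ← Finset.sum_sub_distrib] at hs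
    rw [← neg_eq_zero, ← Finset.sum_neg_distrib] at hs
    refine Eq.trans ?_ hs
    refine Finset.sum_congr rfl fun j _ => ?_
    have := hAp j; have := hCp j; have := hCp i
    have := hA0 j; have := hA1 j; have := hC0 j; have := hC1 j; have := hC0 i; have := hC1 i
    by_cases hj : j = i
    · subst hj
      unfold crossP rot
      split_ifs <;> omega
    · have h1 : A j ≠ A i := fun h => hj (hA h)
      have h2 : C j ≠ C i := fun h => hj (hC h)
      have r1 : rot (2 * n) (A i) = 2 * n - 1 := by simp [rot, hk]
      have r2 : rot (2 * n) (A j) = A j - 1 := by unfold rot; split_ifs <;> omega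
      have r3 : rot (2 * n) (C i) = C i - 1 := by unfold rot; split_ifs <;> omega
      have r4 : rot (2 * n) (C j) = C j - 1 := by unfold rot; split_ifs <;> omega
      beta_reduce
      rw [r1, r2, r3, r4]
      unfold crossP
      split_ifs <;> omega
  · refine Finset.sum_congr rfl fun j _ => ?_
    have h1 : A i ≠ 0 := fun h => hik (hA (h.trans hk.symm))
    have := hAp j; have := hCp j; have := hCp i
    have := hA0 j; have := hA1 j; have := hC0 j; have := hC1 j; have := hC0 i; have := hC1 i
    have := hA0 i; have := hA1 i
    refine if_congr ?_ rfl rfl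
    have r2 : rot (2 * n) (A i) = A i - 1 := by simp [rot, h1]
    have r3 : rot (2 * n) (C i) = C i - 1 := by unfold rot; split_ifs <;> omega
    have r4 : rot (2 * n) (C j) = C j - 1 := by unfold rot; split_ifs <;> omega
    beta_reduce
    rw [r2, r3, r4]
    unfold crossP rot
    split_ifs <;> omega

lemma Nm_eq_cnt (n : ℕ) (σ : Equiv.Perm (Fin n)) (m : ℕ) :
    (Nm n σ m : ℤ) = cnt (fun i : Fin n => (((2 * (i : ℕ) : ℕ) : ℤ) - m) % (2 * n))
      (fun i : Fin n => (((2 * (σ i : ℕ) + 1 : ℕ) : ℤ) - m) % (2 * n)) := by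
  unfold Nm cnt
  rw [← Fintype.sum_prod_type', Finset.sum_boole]
  congr 2
  ext ij
  simp only [mem_filter, mem_univ, true_and]
  constructor
  · exact fun h => h.2
  · intro h
    refine ⟨?_, h⟩
    intro he
    unfold crossP at h
    rw [he] at h
    omega

lemma emod_rot (N x m : ℤ) (hN : 0 < N) : (x - (m + 1)) % N = rot N ((x - m) % N) := by
  have h0 := Int.emod_nonneg (x - m) hN.ne'
  have h1 := Int.emod_lt_of_pos (x - m) hN
  have h : (x - (m + 1)) % N = ((x - m) % N - 1) % N := by
    rw [Int.emod_sub_emod]; congr 1; ring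
  rw [h]
  unfold rot
  split_ifs with hz
  · rw [hz, ← Int.add_emod_right]
    rw [Int.emod_eq_of_lt] <;> omega
  · rw [Int.emod_eq_of_lt] <;> omega

lemma emod_par (n : ℕ) (x : ℤ) : x % (2 * n) % 2 = x % 2 :=
  Int.emod_emod_of_dvd x (Dvd.intro _ rfl)

lemma emod_inj (N x y m : ℤ) (hx : 0 ≤ x) (hy : 0 ≤ y) (hx1 : x < N) (hy1 : y < N)
    (h : (x - m) % N = (y - m) % N) : x = y := by
  have h2 : N ∣ x - y := by
    have := Int.dvd_of_emod_eq_zero (Int.emod_eq_emod_iff_emod_sub_eq_zero.1 h)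
    simpa using this
  have := Int.eq_zero_of_abs_lt_dvd h2 (by rw [abs_lt]; constructor <;> omega)
  omega

lemma Nm_step (n : ℕ) (hn : 1 ≤ n) (σ : Equiv.Perm (Fin n)) (m : ℕ) :
    Nm n σ (m + 1) = Nm n σ m := by
  have hN : (0 : ℤ) < 2 * n := by omega
  have key : (Nm n σ (m + 1) : ℤ) = Nm n σ m := by
    rw [Nm_eq_cnt, Nm_eq_cnt]
    push_cast
    simp only [emod_rot _ _ _ hN]
    have iA : Function.Injective fun i : Fin n => (2 * ((i : ℕ) : ℤ) - m) % (2 * n) := by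
      intro i j h
      have := emod_inj _ _ _ _ (by omega) (by omega) (by omega) (by omega) h
      apply Fin.ext; omega
    have iC : Function.Injective fun i : Fin n => (2 * ((σ i : ℕ) : ℤ) + 1 - m) % (2 * n) := by
      intro i j h
      have := emod_inj _ _ _ _ (by omega) (by omega) (by omega) (by omega) h
      apply σ.injective; apply Fin.ext; omega
    rcases Nat.mod_two_eq_zero_or_one m with hm | hm
    · exact cnt_rot _ _ hn (fun j => Int.emod_nonneg _ hN.ne') (fun j => Int.emod_lt_of_pos _ hN)
        (fun j => Int.emod_nonneg _ hN.ne') (fun j => Int.emod_lt_of_pos _ hN)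
        (fun j => by rw [emod_par]; omega) (fun j => by rw [emod_par]; omega) iA iC
    · rw [cnt_swap, cnt_swap (fun i : Fin n => (2 * ((i : ℕ) : ℤ) - m) % (2 * n))]
      exact cnt_rot _ _ hn (fun j => Int.emod_nonneg _ hN.ne') (fun j => Int.emod_lt_of_pos _ hN)
        (fun j => Int.emod_nonneg _ hN.ne') (fun j => Int.emod_lt_of_pos _ hN)
        (fun j => by rw [emod_par]; omega) (fun j => by rw [emod_par]; omega) iC iA
  exact_mod_cast key

/-- **Theorem.** The count `N(σ)` is independent of the choice of linear ordering of the
`2n` boundary points compatible with their cyclic ordering: `N_m(σ) = N_0(σ)` for every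
basepoint `m ∈ {0,…,2n−1}`. -/
theorem Nm_independent_of_basepoint (n : ℕ) (hn : 1 ≤ n) (σ : Equiv.Perm (Fin n))
    (m : ℕ) (hm : m < 2 * n) :
    Nm n σ m = Nm n σ 0 := by
  clear hm
  induction m with
  | zero => rfl
  | succ m ih => rw [Nm_step n hn, ih]
end
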